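/- arXiv:funct-an/9406003 — 2 statements merged into one kernel-verified Lean document; each statement's English description precedes it below -/
import Mathlib

section
/- Let A be an AF C*-algebra and let B be an infinite-dimensional, unital, simple AF C*-algebra. Then there exist a ℂ-linear isometry γ : A → B and a ℂ-linear map δ : B → A with ‖δ(b)‖ ≤ ‖b‖ for all b ∈ B such that δ ∘ γ = id_A; in particular γ(A) is a contractively complemented closed subspace of B. -/
/-!
Statement 1.

If `A` is an AF C*-algebra and `B` is an infinite-dimensional unital simple AF
C*-algebra, then there is a ℂ-linear isometry `γ : A → B` and a contractive
ℂ-linear left inverse `δ : B → A`; in particular `γ(A)` is contractively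
complemented in `B`.
-/

/-- `S` is an AF presentation of the C*-algebra `A`: an increasing sequence of
finite-dimensional *-subalgebras whose union is dense. -/
def IsAFPresentation (A : Type*) [NonUnitalCStarAlgebra A]
    (S : ℕ → NonUnitalStarSubalgebra ℂ A) : Prop :=
  Monotone S ∧ (∀ k, FiniteDimensional ℂ (S k)) ∧ Dense (⋃ k, (S k : Set A))

/-- A C*-algebra is simple if its only closed two-sided ideals are `{0}` and
the whole algebra. -/
def IsSimpleCStarAlgebra (A : Type*) [NonUnitalCStarAlgebra A] : Prop :=
  ∀ I : TwoSidedIdeal A, IsClosed (I : Set A) → I = ⊥ ∨ I = ⊤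



namespace AFP

section NormLemmas
open scoped Matrix.Norms.L2Operator MatrixOrder ComplexOrder

/-- Norm estimate for sums `∑ M a b • v a * star (w b)` over orthogonal families. -/
lemma norm_sum_le {A : Type*} [NonUnitalCStarAlgebra A] {ι : Type*} [Fintype ι] [DecidableEq ι]
    (v w : ι → A) (p r : ι → A) (hp : ∀ a, IsStarProjection (p a))
    (hr : ∀ a, IsStarProjection (r a))
    (hv : ∀ a, star (v a) * v a = p a) (hv' : ∀ a b, a ≠ b → star (v a) * v b = 0)
    (hw : ∀ a, star (w a) * w a = r a) (hw' : ∀ a b, a ≠ b → star (w a) * w b = 0)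
    (M : Matrix ι ι ℂ) :
    ‖∑ a, ∑ b, M a b • (v a * star (w b))‖ ≤ ‖M‖ := by
  let _ := CStarAlgebra.spectralOrder A
  have := CStarAlgebra.spectralOrderedRing A
  have hwr : ∀ a, w a * r a = w a := by
    intro a
    have : star (w a * r a - w a) * (w a * r a - w a) = 0 := by
      have h1 := (hr a).isIdempotentElem.eq
      have h2 := (hr a).isSelfAdjoint.star_eq
      simp only [star_sub, star_mul, h2, sub_mul, mul_sub, mul_assoc, hw]
      rw [← mul_assoc (star (w a)) (w a) (r a), hw, h1]
      simp [h1]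
    exact sub_eq_zero.mp (CStarRing.star_mul_self_eq_zero_iff _ |>.mp this)
  -- the projection onto the columns w
  set Q : A := ∑ b, w b * star (w b) with hQ
  have hQsa : star Q = Q := by simp [hQ]
  have hQQ : Q * Q = Q := by
    simp only [hQ, Finset.sum_mul, Finset.mul_sum]
    refine Finset.sum_congr rfl fun a _ => ?_
    rw [Finset.sum_eq_single a]
    · rw [mul_assoc, ← mul_assoc (star (w a)), hw, ← mul_assoc, hwr]
    · intro b _ hb
      rw [mul_assoc, ← mul_assoc (star (w b)), hw' b a hb]; simp
    · simp
  have hQn : ‖Q‖ ≤ 1 := by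
    have h := CStarRing.norm_star_mul_self (x := Q)
    rw [hQsa, hQQ] at h
    by_contra hlt
    nlinarith [norm_nonneg Q]
  -- the quadratic form
  let y : Matrix ι ι ℂ → ι → A := fun M a => ∑ b, M a b • star (w b)
  have hyy : ∀ M : Matrix ι ι ℂ, ∑ a, star (y M a) * y M a
      = ∑ b, ∑ d, (star M * M) b d • (w b * star (w d)) := by
    intro M
    simp only [y, star_sum, star_smul, star_star, Finset.sum_mul, Finset.mul_sum, smul_mul_smul_comm,
      Matrix.mul_apply, Matrix.star_apply, Finset.sum_smul]
    rw [Finset.sum_comm]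
    conv_rhs => rw [Finset.sum_comm]
    refine Finset.sum_congr rfl fun d _ => ?_
    rw [Finset.sum_comm]
  obtain ⟨K, hK⟩ : ∃ K : Matrix ι ι ℂ, algebraMap ℝ (Matrix ι ι ℂ) (‖M‖ ^ 2) - star M * M = star K * K := by
    have := CStarAlgebra.star_mul_le_algebraMap_norm_sq (a := M)
    exact CStarAlgebra.nonneg_iff_eq_star_mul_self.mp (sub_nonneg.mpr this)
  have hT : star (∑ a, ∑ b, M a b • (v a * star (w b))) * (∑ a, ∑ b, M a b • (v a * star (w b)))
      = ∑ a, star (y M a) * (p a * y M a) := by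
    have e1 : (∑ a, ∑ b, M a b • (v a * star (w b))) = ∑ a, v a * y M a := by
      simp [y, Finset.mul_sum, mul_smul_comm]
    rw [e1, star_sum, Finset.sum_mul]
    refine Finset.sum_congr rfl fun a _ => ?_
    rw [Finset.mul_sum, Finset.sum_eq_single a]
    · rw [star_mul, mul_assoc, ← mul_assoc (star (v a)), hv]
    · intro b _ hb
      rw [star_mul, mul_assoc, ← mul_assoc (star (v a)), hv' a b hb.symm]; simp
    · simp
  have hle1 : ∑ a, star (y M a) * (p a * y M a) ≤ ∑ a, star (y M a) * y M a := by
    refine Finset.sum_le_sum fun a _ => ?_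
    have : star (y M a) * y M a - star (y M a) * (p a * y M a)
        = star (y M a - p a * y M a) * (y M a - p a * y M a) := by
      have h1 := (hp a).isIdempotentElem.eq
      have h2 := (hp a).isSelfAdjoint.star_eq
      simp only [star_sub, star_mul, h2, sub_mul, mul_sub, mul_assoc]
      rw [← mul_assoc (p a) (p a), h1]; simp
    exact sub_nonneg.mp (this ▸ star_mul_self_nonneg _)
  have hle2 : ∑ a, star (y M a) * y M a ≤ ((‖M‖ ^ 2 : ℝ) : ℂ) • Q := by
    have : ((‖M‖ ^ 2 : ℝ) : ℂ) • Q - ∑ a, star (y M a) * y M a = ∑ a, star (y K a) * y K a := by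
      rw [hyy, hyy, ← hK, hQ, Finset.smul_sum, ← Finset.sum_sub_distrib]
      refine Finset.sum_congr rfl fun b _ => ?_
      simp only [Matrix.sub_apply, sub_smul, Finset.sum_sub_distrib]
      congr 1
      rw [Finset.sum_eq_single b]
      · simp [Matrix.algebraMap_matrix_apply]
      · intro d _ hd
        simp [Matrix.algebraMap_matrix_apply, hd.symm]
      · simp
    exact sub_nonneg.mp (this ▸ Finset.sum_nonneg fun a _ => star_mul_self_nonneg _)
  have hfin : ‖∑ a, ∑ b, M a b • (v a * star (w b))‖ ^ 2 ≤ ‖M‖ ^ 2 := by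
    rw [sq, ← CStarRing.norm_star_mul_self, hT]
    refine (CStarAlgebra.norm_le_norm_of_nonneg_of_le ?_ (hle1.trans hle2)).trans ?_
    · rw [← hT]; exact star_mul_self_nonneg _
    · rw [norm_smul, Complex.norm_real, Real.norm_of_nonneg (by positivity)]
      nlinarith [sq_nonneg ‖M‖]
  exact le_of_sq_le_sq hfin (norm_nonneg _) 

/-- compressions are contractive -/
lemma norm_coeff_le {B : Type*} [NonUnitalCStarAlgebra B] {ι : Type*} [Fintype ι] [DecidableEq ι]
    (v w : ι → B) (q : B) (hq : IsStarProjection q) (hq0 : q ≠ 0)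
    (hv : ∀ a, star (v a) * v a = q) (hv' : ∀ a b, a ≠ b → star (v a) * v b = 0)
    (hw : ∀ a, star (w a) * w a = q) (hw' : ∀ a b, a ≠ b → star (w a) * w b = 0)
    (M : Matrix ι ι ℂ) (h : B) (hM : ∀ a b, star (v a) * h * w b = M a b • q) :
    ‖M‖ ≤ ‖h‖ := by
  have hqn : ‖q‖ = 1 := by
    have h := CStarRing.norm_star_mul_self (x := q)
    rw [hq.isSelfAdjoint.star_eq, hq.isIdempotentElem.eq] at h
    have : ‖q‖ ≠ 0 := norm_ne_zero_iff.mpr hq0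
    exact (mul_left_cancel₀ this (by linarith)) 
  have key : ∀ (u : ι → B), (∀ a, star (u a) * u a = q) → (∀ a b, a ≠ b → star (u a) * u b = 0) →
      ∀ ξ : EuclideanSpace ℂ ι, ‖∑ a, ξ a • u a‖ = ‖ξ‖ := by
    intro u hu hu' ξ
    have h1 : star (∑ a, ξ a • u a) * (∑ a, ξ a • u a) = ((‖ξ‖ ^ 2 : ℝ) : ℂ) • q := by
      simp only [star_sum, star_smul, Finset.sum_mul, Finset.mul_sum, smul_mul_smul_comm]
      rw [EuclideanSpace.norm_sq_eq, Complex.ofReal_sum, Finset.sum_smul]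
      refine Finset.sum_congr rfl fun a _ => ?_
      rw [Finset.sum_eq_single a]
      · rw [hu]; congr 1
        simp [← Complex.conj_mul']
      · intro b _ hb; 
        simp [hu' _ _ hb]
      · simp
    have h2 := CStarRing.norm_star_mul_self (x := ∑ a, ξ a • u a)
    rw [h1, norm_smul, hqn, mul_one, Complex.norm_real, Real.norm_of_nonneg (by positivity)] at h2
    nlinarith [norm_nonneg ξ, norm_nonneg (∑ a, ξ a • u a), sq_nonneg (‖ξ‖ - ‖∑ a, ξ a • u a‖)]
  rw [Matrix.l2_opNorm_def]
  refine ContinuousLinearMap.opNorm_le_bound _ (norm_nonneg _) fun η => ?_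
  set ξ : EuclideanSpace ℂ ι := WithLp.toLp 2 (M.mulVec η) with hξ
  have e : ((Matrix.toEuclideanLin (𝕜 := ℂ)).trans LinearMap.toContinuousLinearMap M) η = ξ := by
    rfl
  change ‖((Matrix.toEuclideanLin (𝕜 := ℂ)).trans LinearMap.toContinuousLinearMap M) η‖ ≤ _
  rw [e]
  have h1 : star (∑ a, ξ a • v a) * h * (∑ b, η b • w b) = ((‖ξ‖ ^ 2 : ℝ) : ℂ) • q := by
    simp only [star_sum, star_smul, Finset.sum_mul, Finset.mul_sum, smul_mul_assoc, mul_smul_comm, hM, Finset.smul_sum]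
    rw [EuclideanSpace.norm_sq_eq, Complex.ofReal_sum, Finset.sum_smul, Finset.sum_comm]
    refine Finset.sum_congr rfl fun a _ => ?_
    rw [Complex.ofReal_pow, ← Complex.conj_mul']
    have : ξ a = ∑ b, M a b * η b := by simp [hξ, Matrix.mulVec, dotProduct]
    conv_rhs => rw [this]
    rw [← this, this]
    simp only [smul_smul, ← Finset.sum_smul, Finset.mul_sum, RCLike.star_def]
    congr 1
    refine Finset.sum_congr rfl fun b _ => by ring
  have h2 : ‖ξ‖ ^ 2 ≤ ‖ξ‖ * ‖h‖ * ‖η‖ := by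
    have h3 : ‖((‖ξ‖ ^ 2 : ℝ) : ℂ) • q‖ = ‖ξ‖ ^ 2 := by
      rw [norm_smul, hqn, mul_one, Complex.norm_real, Real.norm_of_nonneg (by positivity)]
    rw [← h3, ← h1]
    refine (norm_mul_le _ _).trans ?_
    rw [key w hw hw']
    gcongr
    refine (norm_mul_le _ _).trans ?_
    rw [norm_star, key v hv hv']
  by_contra hlt
  push Not at hlt
  have : 0 < ‖ξ‖ := lt_of_le_of_lt (by positivity) hlt
  nlinarith

end NormLemmas

/-- norm of a block diagonal sum -/
lemma norm_corner_add_le {B : Type*} [CStarAlgebra B] (P Q X Y : B) (hP : IsStarProjection P)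
    (hQ : IsStarProjection Q) (m : ℝ) (hX : ‖X‖ ≤ m) (hY : ‖Y‖ ≤ m) (hPX : P * X = X)
    (hXQ : X * Q = X) :
    ‖X + (1 - P) * Y * (1 - Q)‖ ≤ m := by
  let _ := CStarAlgebra.spectralOrder B
  have := CStarAlgebra.spectralOrderedRing B
  have hm : 0 ≤ m := (norm_nonneg _).trans hX
  set Z := (1 - P) * Y * (1 - Q) with hZ
  have hZm : ‖(1 - P) * Y‖ ≤ m := by
    refine (norm_mul_le _ _).trans ?_
    have : ‖1 - P‖ ≤ 1 := hP.one_sub.norm_le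
    nlinarith [norm_nonneg Y]
  have hXP : star X * P = star X := by
    rw [← hPX, star_mul, hP.isSelfAdjoint.star_eq, mul_assoc, hP.isIdempotentElem.eq]
  have h1 : star X * Z = 0 := by
    rw [hZ, ← mul_assoc, ← mul_assoc, mul_sub (star X), hXP]; simp
  have h2 : star Z * X = 0 := by
    have := congrArg star h1; simpa using this
  have h3 : star (X + Z) * (X + Z) = star X * X + star Z * Z := by
    simp [add_mul, mul_add, h1, h2]
  have aux : ∀ W R : B, ‖W‖ ≤ m → IsStarProjection R → star (W * R) * (W * R) ≤ (m ^ 2 : ℝ) • R := by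
    intro W R hW hR
    have h := star_left_conjugate_le_conjugate (CStarAlgebra.star_mul_le_algebraMap_norm_sq (a := W)) R
    rw [Algebra.algebraMap_eq_smul_one, mul_smul_comm, smul_mul_assoc, mul_one,
      hR.isSelfAdjoint.star_eq, hR.isIdempotentElem.eq] at h
    have e : star (W * R) * (W * R) = R * (star W * W) * R := by
      rw [star_mul, hR.isSelfAdjoint.star_eq]; simp only [mul_assoc]
    rw [e]
    refine h.trans ?_
    have : (0 : B) ≤ R := by
      have := star_mul_self_nonneg R
      rwa [hR.isSelfAdjoint.star_eq, hR.isIdempotentElem.eq] at this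
    have h4 : ‖W‖ ^ 2 ≤ m ^ 2 := by gcongr
    exact smul_le_smul_of_nonneg_right h4 this
  have h4 : star (X + Z) * (X + Z) ≤ algebraMap ℝ B (m ^ 2) := by
    rw [h3]
    have a1 := aux X Q hX hQ
    have a2 := aux ((1 - P) * Y) (1 - Q) hZm hQ.one_sub
    rw [hXQ] at a1
    refine (add_le_add a1 a2).trans (le_of_eq ?_)
    rw [← smul_add, Algebra.algebraMap_eq_smul_one]; simp
  have h5 : ‖X + Z‖ ^ 2 ≤ m ^ 2 := by
    rw [sq, ← CStarRing.norm_star_mul_self]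
    exact (CStarAlgebra.norm_le_iff_le_algebraMap _ (by positivity) (star_mul_self_nonneg _)).mpr h4
  exact le_of_sq_le_sq h5 hm


end AFP


namespace AFP

lemma isClosed_of_fd {A : Type*} [NonUnitalCStarAlgebra A] (G : NonUnitalStarSubalgebra ℂ A)
    [FiniteDimensional ℂ G] : IsClosed (G : Set A) :=
  have : FiniteDimensional ℂ G.toSubmodule := ‹FiniteDimensional ℂ G›
  Submodule.closed_of_finiteDimensional G.toSubmodule

lemma quasispectrum_finite {A : Type*} [NonUnitalCStarAlgebra A] (G : NonUnitalStarSubalgebra ℂ A)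
    [FiniteDimensional ℂ G] (y : A) (hy : y ∈ G) : (quasispectrum ℂ y).Finite := by
  -- powers of `y` in the unitization
  have hmem : ∀ n : ℕ, ∃ g : G, ((y : Unitization ℂ A)) ^ (n + 1) = ((g : A) : Unitization ℂ A) := by
    intro n
    induction n with
    | zero => exact ⟨⟨y, hy⟩, by simp⟩
    | succ n ih =>
      obtain ⟨g, hg⟩ := ih
      exact ⟨g * ⟨y, hy⟩, by rw [pow_succ, hg]; simp⟩
  choose g hg using hmem
  have hld : ¬ LinearIndependent ℂ g := by
    intro h
    have := h.finite
    exact not_finite ℕ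
  rw [linearIndependent_iff] at hld
  push Not at hld
  obtain ⟨l, hl, hl0⟩ := hld
  let P : Polynomial ℂ := ∑ n ∈ l.support, Polynomial.monomial (n + 1) (l n)
  have hcoef : ∀ n, P.coeff (n + 1) = l n := by
    intro n
    simp only [P, Polynomial.finsetSum_coeff, Polynomial.coeff_monomial]
    simp
    intro h; exact h.symm
  have hP0 : P ≠ 0 := by
    intro h
    apply hl0
    ext n
    rw [← hcoef n, h]; simp
  have hPy : Polynomial.aeval (y : Unitization ℂ A) P = 0 := by
    simp only [P, map_sum, Polynomial.aeval_monomial, hg]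
    have h2 : ((Finsupp.linearCombination ℂ g l : G) : A) = 0 := by rw [hl]; rfl
    rw [Finsupp.linearCombination_apply, Finsupp.sum] at h2
    have h3 := congrArg (fun a : A => (a : Unitization ℂ A)) h2
    simp only [Unitization.inr_zero] at h3
    rw [← h3]
    rw [AddSubmonoidClass.coe_finsetSum]
    refine Eq.trans ?_ (map_sum (Unitization.inrNonUnitalAlgHom ℂ A) _ _).symm
    refine Finset.sum_congr rfl fun n _ => ?_
    simp [Unitization.inrNonUnitalAlgHom, Algebra.smul_def]
  rw [Unitization.quasispectrum_eq_spectrum_inr]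
  refine (P.roots.toFinset.finite_toSet).subset ?_
  intro z hz
  have h := spectrum.subset_polynomial_aeval (y : Unitization ℂ A) P ⟨z, hz, rfl⟩
  rw [hPy, spectrum.zero_eq] at h
  simpa [hP0] using h

lemma exists_eigenproj {A : Type*} [NonUnitalCStarAlgebra A] (G : NonUnitalStarSubalgebra ℂ A)
    [FiniteDimensional ℂ G] (y : A) (hy : y ∈ G) (hsa : IsSelfAdjoint y) (hy0 : y ≠ 0) :
    ∃ (c : ℂ) (r : A), c ≠ 0 ∧ r ∈ G ∧ IsStarProjection r ∧ r ≠ 0 ∧ y * r = c • r := by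
  classical
  have hfin := quasispectrum_finite G y hy
  have hn : IsStarNormal y := hsa.isStarNormal
  obtain ⟨c, hc, hc0⟩ : ∃ c ∈ quasispectrum ℂ y, c ≠ 0 := by
    by_contra hcon
    push Not at hcon
    apply hy0
    have h1 : cfcₙ (id : ℂ → ℂ) y = y := cfcₙ_id ℂ y
    have h2 : cfcₙ (id : ℂ → ℂ) y = cfcₙ (fun _ => (0 : ℂ)) y := cfcₙ_congr fun z hz => hcon z hz
    rw [← h1, h2]; simp
  let f : ℂ → ℂ := fun z => if z = c then 1 else 0
  have hcont : ∀ f : ℂ → ℂ, ContinuousOn f (quasispectrum ℂ y) := fun f => hfin.continuousOn f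
  have hf0 : f 0 = 0 := by simp [f, hc0.symm]
  refine ⟨c, cfcₙ f y, hc0, ?_, ⟨?_, ?_⟩, ?_, ?_⟩
  · have h1 : cfcₙ f y ∈ NonUnitalStarAlgebra.elemental ℂ y := cfcₙ_mem_elemental f y
    exact NonUnitalStarAlgebra.elemental.le_of_mem (isClosed_of_fd G) hy h1
  · rw [IsIdempotentElem, ← cfcₙ_mul f f y (hcont _) hf0 (hcont _) hf0]
    congr 1
    ext z; simp [f]
  · rw [IsSelfAdjoint, ← cfcₙ_star]
    congr 1
    ext z; simp only [f]; split_ifs <;> simp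
  · intro h
    have h1 : cfcₙ f y = cfcₙ (fun _ => (0 : ℂ)) y := by rw [h]; simp
    have h2 := (cfcₙ_eq_cfcₙ_iff_eqOn (R := ℂ) (a := y) hn (hcont _) hf0 continuousOn_const rfl).mp h1
    have := h2 hc
    simp [f] at this
  · have h1 : cfcₙ (id : ℂ → ℂ) y = y := cfcₙ_id ℂ y
    have h2 : y * cfcₙ f y = cfcₙ (id : ℂ → ℂ) y * cfcₙ f y := by rw [h1]
    rw [h2, ← cfcₙ_mul id f y (hcont _) rfl (hcont _) hf0, ← cfcₙ_smul c f y (hcont _) hf0]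
    congr 1
    ext z; simp only [f]; split_ifs with h <;> simp [h]

/-- minimal projections of a subalgebra -/
structure MinProj {A : Type*} [NonUnitalCStarAlgebra A] (G : NonUnitalStarSubalgebra ℂ A)
    (p : A) : Prop where
  mem : p ∈ G
  proj : IsStarProjection p
  ne : p ≠ 0
  scal : ∀ x ∈ G, ∃ c : ℂ, p * x * p = c • p

section
variable {A : Type*} [NonUnitalCStarAlgebra A]

lemma _root_.IsStarProjection.mm {p : A} (h : IsStarProjection p) : p * p = p :=
  h.isIdempotentElem.eq

lemma _root_.IsStarProjection.ss {p : A} (h : IsStarProjection p) : star p = p :=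
  h.isSelfAdjoint.star_eq

lemma minProj_of (G : NonUnitalStarSubalgebra ℂ A)
    [FiniteDimensional ℂ G] (p : A) (hp : p ∈ G) (hpp : IsStarProjection p) (hp0 : p ≠ 0)
    (hmin : ∀ r ∈ G, IsStarProjection r → p * r = r → r ≠ 0 → r = p) : MinProj G p := by
  have key : ∀ x ∈ G, IsSelfAdjoint x → ∃ c : ℂ, p * x * p = c • p := by
    intro x hx hsa
    by_cases h0 : p * x * p = 0
    · exact ⟨0, by simp [h0]⟩
    have hmem : p * x * p ∈ G := mul_mem (mul_mem hp hx) hp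
    have hsa' : IsSelfAdjoint (p * x * p) := by
      rw [IsSelfAdjoint, star_mul, star_mul, hpp.ss, hsa.star_eq, mul_assoc]
    obtain ⟨c, r, hc, hrG, hr, hr0, hcr⟩ := exists_eigenproj G _ hmem hsa' h0
    have hpr : p * r = r := by
      have h1 : p * (c • r) = c • r := by
        rw [← hcr]; simp only [← mul_assoc, hpp.mm]
      rw [mul_smul_comm] at h1
      exact smul_right_injective _ hc h1
    have := hmin r hrG hr hpr hr0
    subst this
    refine ⟨c, ?_⟩
    rw [← hcr]; simp only [mul_assoc, hpp.mm]
  refine ⟨hp, hpp, hp0, fun x hx => ?_⟩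
  have hs : star x ∈ G := star_mem hx
  obtain ⟨c, h1⟩ := key (x + star x) (add_mem hx hs) (by simp [IsSelfAdjoint, add_comm])
  obtain ⟨d, h2⟩ := key (Complex.I • (x - star x)) (SMulMemClass.smul_mem _ (sub_mem hx hs)) (by
    rw [IsSelfAdjoint, star_smul, star_sub, star_star]
    simp only [RCLike.star_def, Complex.conj_I, neg_smul, ← smul_neg, neg_sub])
  refine ⟨(1 / 2) * (c - Complex.I * d), ?_⟩
  have e : x = (1 / 2 : ℂ) • ((x + star x) - Complex.I • (Complex.I • (x - star x))) := by
    rw [smul_smul, Complex.I_mul_I]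
    module
  rw [e]
  rw [mul_smul_comm, smul_mul_assoc, mul_sub, sub_mul, h1, mul_smul_comm, smul_mul_assoc, h2]
  module

/-- left multiplication range -/
noncomputable def rk (G : NonUnitalStarSubalgebra ℂ A) (p : A) : ℕ :=
  Module.finrank ℂ (G.toSubmodule.map (LinearMap.mulLeft ℂ p))

lemma rk_lt (G : NonUnitalStarSubalgebra ℂ A)
    [FiniteDimensional ℂ G] (p r : A) (hr : IsStarProjection r) (hp : IsStarProjection p)
    (hpG : p ∈ G) (hrG : r ∈ G) (hpr : p * r = r) (hne : r ≠ p) : rk G r < rk G p := by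
  have : FiniteDimensional ℂ G.toSubmodule := ‹FiniteDimensional ℂ G›
  refine Submodule.finrank_lt_finrank_of_lt (lt_of_le_of_ne ?_ ?_)
  · rintro _ ⟨x, hx, rfl⟩
    exact ⟨r * x, (mul_mem hrG hx : r * x ∈ G), by simp [← mul_assoc, hpr]⟩
  · intro h
    have h1 : p ∈ G.toSubmodule.map (LinearMap.mulLeft ℂ p) := ⟨p, hpG, by simp [hp.mm]⟩
    rw [← h] at h1
    obtain ⟨x, _, hx⟩ := h1
    simp only [LinearMap.mulLeft_apply] at hx
    have h2 : r * p = p := by rw [← hx, ← mul_assoc, hr.mm]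
    have h3 := congrArg star hpr
    rw [star_mul, hr.ss, hp.ss, h2] at h3
    exact hne h3.symm

lemma exists_decomp (G : NonUnitalStarSubalgebra ℂ A) [FiniteDimensional ℂ G] :
    ∀ (n : ℕ) (p : A), rk G p = n → p ∈ G → IsStarProjection p →
    ∃ (S : Type) (_ : Fintype S) (r : S → A), (∀ s, MinProj G (r s)) ∧
      (∀ s t, s ≠ t → r s * r t = 0) ∧ ∑ s, r s = p ∧ (∀ s, p * r s = r s) := by
  intro n
  induction n using Nat.strong_induction_on with
  | _ n ih =>
    intro p hn hpG hp
    by_cases hp0 : p = 0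
    · subst hp0
      exact ⟨Empty, inferInstance, Empty.elim, by simp, by simp, by simp, by simp⟩
    by_cases hmin : ∀ r ∈ G, IsStarProjection r → p * r = r → r ≠ 0 → r = p
    · exact ⟨Unit, inferInstance, fun _ => p, fun _ => minProj_of G p hpG hp hp0 hmin,
        fun s t h => absurd rfl h, by simp, fun _ => hp.mm⟩
    push Not at hmin
    obtain ⟨r, hrG, hr, hpr, hr0, hne⟩ := hmin
    have hrp : r * p = r := by
      have := congrArg star hpr
      rwa [star_mul, hr.ss, hp.ss] at this
    have hq : IsStarProjection (p - r) := by
      refine ⟨?_, ?_⟩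
      · simp [IsIdempotentElem, mul_sub, sub_mul, hp.mm, hr.mm, hpr, hrp]
      · simp [IsSelfAdjoint, hp.ss, hr.ss]
    have hqG : p - r ∈ G := sub_mem hpG hrG
    have l1 : rk G r < n := hn ▸ rk_lt G p r hr hp hpG hrG hpr hne
    have l2 : rk G (p - r) < n := hn ▸ rk_lt G p (p - r) hq hp hpG hqG
      (by rw [mul_sub, hp.mm, hpr]) (by simpa using hr0)
    obtain ⟨S, _, a, ha1, ha2, ha3, ha4⟩ := ih _ l1 r rfl hrG hr
    obtain ⟨T, _, b, hb1, hb2, hb3, hb4⟩ := ih _ l2 (p - r) rfl hqG hq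
    have hab : ∀ s t, a s * b t = 0 := by
      intro s t
      have h1 : a s * r = a s := by
        have := congrArg star (ha4 s)
        rwa [star_mul, hr.ss, (ha1 s).proj.ss] at this
      rw [← h1, ← hb4 t, mul_assoc, ← mul_assoc r, mul_sub, hr.mm, hrp]; simp
    refine ⟨S ⊕ T, inferInstance, Sum.elim a b, ?_, ?_, ?_, ?_⟩
    · rintro (s | t) <;> simp [ha1, hb1]
    · rintro (s | s) (t | t) hst
      · exact ha2 s t (by simpa using hst)
      · exact hab s t
      · have := congrArg star (hab t s)
        rw [star_mul, (ha1 t).proj.ss, (hb1 s).proj.ss] at this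
        simpa using this
      · exact hb2 s t (by simpa using hst)
    · simp [ha3, hb3]
    · rintro (s | t)
      · simp only [Sum.elim_inl]; rw [← ha4, ← mul_assoc, hpr]
      · simp only [Sum.elim_inr]; rw [← hb4, ← mul_assoc, mul_sub, hp.mm, hpr]

lemma exists_unit (G : NonUnitalStarSubalgebra ℂ A) [FiniteDimensional ℂ G] :
    ∃ u ∈ G, IsStarProjection u ∧ ∀ x ∈ G, u * x = x := by
  have : FiniteDimensional ℂ G.toSubmodule := ‹FiniteDimensional ℂ G›
  have hbd : ∀ p ∈ G, rk G p ≤ Module.finrank ℂ G := by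
    intro p hp
    refine Submodule.finrank_mono (s := _) (t := G.toSubmodule) ?_
    rintro _ ⟨x, hx, rfl⟩
    exact (mul_mem hp hx : p * x ∈ G)
  let T : Set ℕ := {n | ∃ p ∈ G, IsStarProjection p ∧ rk G p = n}
  have hT : BddAbove T := ⟨_, by rintro n ⟨p, hp, _, rfl⟩; exact hbd p hp⟩
  have hne : T.Nonempty := ⟨_, 0, zero_mem _, IsStarProjection.zero A, rfl⟩
  obtain ⟨u, huG, hu, hun⟩ := Nat.sSup_mem hne hT
  refine ⟨u, huG, hu, ?_⟩
  by_contra hcon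
  push Not at hcon
  obtain ⟨x, hx, hxu⟩ := hcon
  set z := x - u * x with hz
  have hzG : z ∈ G := sub_mem hx (mul_mem huG hx)
  have hz0 : z ≠ 0 := fun h => hxu (sub_eq_zero.mp h).symm
  have huz : u * z = 0 := by rw [hz, mul_sub, ← mul_assoc, hu.mm, sub_self]
  obtain ⟨c, r, hc, hrG, hr, hr0, hcr⟩ := exists_eigenproj G (z * star z)
    (mul_mem hzG (star_mem hzG)) (IsSelfAdjoint.mul_star_self z)
    (fun h => hz0 (CStarRing.mul_star_self_eq_zero_iff z |>.mp h))
  have hur : u * r = 0 := by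
    have : u * (c • r) = 0 := by rw [← hcr, ← mul_assoc, ← mul_assoc, huz]; simp
    rw [mul_smul_comm] at this
    exact (smul_eq_zero.mp this).resolve_left hc
  have hru : r * u = 0 := by
    have := congrArg star hur
    rwa [star_mul, hu.ss, hr.ss, star_zero] at this
  have hsum : IsStarProjection (u + r) := by
    refine ⟨?_, ?_⟩
    · simp [IsIdempotentElem, mul_add, add_mul, hu.mm, hr.mm, hur, hru]
    · simp [IsSelfAdjoint, hu.ss, hr.ss]
  have hsG : u + r ∈ G := add_mem huG hrG
  have := rk_lt G (u + r) u hu hsum hsG huG (by rw [add_mul, hu.mm, hru, add_zero]) (by simpa using hr0)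
  have h2 : rk G (u + r) ≤ sSup T := le_csSup hT ⟨_, hsG, hsum, rfl⟩
  omega

lemma mul_self_of_star_mul {v q : A} (hq : IsStarProjection q) (h : star v * v = q) : v * q = v := by
  have : star (v * q - v) * (v * q - v) = 0 := by
    simp only [star_sub, star_mul, hq.ss, sub_mul, mul_sub, mul_assoc, h]
    rw [← mul_assoc (star v) v q, h, hq.mm]
    simp [hq.mm]
  exact sub_eq_zero.mp (CStarRing.star_mul_self_eq_zero_iff _ |>.mp this)

/-- normalisation of an element with minimal right support -/
lemma exists_normalize (G : NonUnitalStarSubalgebra ℂ A) (p x : A) (hp : MinProj G p)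
    (hx : x ∈ G) (hxp : x * p = x) (hx0 : x ≠ 0) :
    ∃ c : ℂ, c ≠ 0 ∧ star (c • x) * (c • x) = p := by
  obtain ⟨d, hd⟩ := hp.scal (star x * x) (mul_mem (star_mem hx) hx)
  have h1 : star x * x = d • p := by
    rw [← hd, ← mul_assoc, mul_assoc _ x p, hxp]
    have := congrArg star hxp
    rw [star_mul, hp.proj.ss] at this
    rw [this]
  -- d is a positive real
  let _ := CStarAlgebra.spectralOrder A
  have := CStarAlgebra.spectralOrderedRing A
  have hpn : ‖p‖ ≠ 0 := norm_ne_zero_iff.mpr hp.ne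
  have hsd : (starRingEnd ℂ) d = d := by
    have h2 := congrArg star h1
    rw [star_mul, star_star, h1, star_smul, hp.proj.ss] at h2
    have := smul_left_injective ℂ hp.ne h2
    exact this.symm
  obtain ⟨e, he⟩ := Complex.conj_eq_iff_real.mp hsd
  have hd0 : d ≠ 0 := by
    rintro rfl
    rw [zero_smul] at h1
    exact hx0 (CStarRing.star_mul_self_eq_zero_iff x |>.mp h1)
  have he0 : 0 < e := by
    rcases lt_trichotomy e 0 with hlt | h0 | hgt
    · exfalso
      have hp' : (0 : A) ≤ p := by
        have := star_mul_self_nonneg p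
        rwa [hp.proj.ss, hp.proj.mm] at this
      have h3 : (0 : A) ≤ star x * x := star_mul_self_nonneg x
      rw [h1, he] at h3
      have h4 : (0 : A) ≤ (-e) • p := smul_nonneg (by linarith) hp'
      have h5 : ((e : ℂ) • p) = e • p := by simp
      rw [h5] at h3
      rw [neg_smul] at h4
      have h6 : e • p = 0 := le_antisymm (by simpa using h4) h3
      rcases smul_eq_zero.mp h6 with h | h
      · linarith
      · exact hp.ne h
    · exfalso; apply hd0; rw [he, h0]; simp
    · exact hgt
  refine ⟨((Real.sqrt e)⁻¹ : ℝ), ?_, ?_⟩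
  · simp; exact (Real.sqrt_pos.mpr he0).ne'
  · rw [star_smul, smul_mul_smul_comm, h1, smul_smul, he]
    have : (star (((Real.sqrt e)⁻¹ : ℝ) : ℂ) * (((Real.sqrt e)⁻¹ : ℝ) : ℂ) * (e : ℂ)) = 1 := by
      rw [RCLike.star_def, Complex.conj_ofReal, ← Complex.ofReal_mul, ← Complex.ofReal_mul]
      rw [← mul_inv, Real.mul_self_sqrt he0.le, inv_mul_cancel₀ he0.ne']; simp
    rw [this, one_smul]

/-- equivalence of minimal projections -/
def EqvIn (G : NonUnitalStarSubalgebra ℂ A) (r s : A) : Prop :=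
  ∃ f ∈ G, f * star f = r ∧ star f * f = s

lemma eqv_of_ne (G : NonUnitalStarSubalgebra ℂ A) (r s x : A) (hr : MinProj G r) (hs : MinProj G s)
    (hx : x ∈ G) (h : r * x * s ≠ 0) : EqvIn G r s := by
  have hm : r * x * s ∈ G := mul_mem (mul_mem hr.mem hx) hs.mem
  obtain ⟨c, hc, h1⟩ := exists_normalize G s (r * x * s) hs hm (by rw [mul_assoc, hs.proj.mm]) h
  set f := c • (r * x * s) with hf
  have hfG : f ∈ G := SMulMemClass.smul_mem _ hm
  refine ⟨f, hfG, ?_, h1⟩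
  have hrf : r * f = f := by rw [hf, mul_smul_comm]; simp only [← mul_assoc, hr.proj.mm]
  obtain ⟨d, hd⟩ := hr.scal (f * star f) (mul_mem hfG (star_mem hfG))
  have hfr : star f * r = star f := by
    have := congrArg star hrf; rwa [star_mul, hr.proj.ss] at this
  have h2 : f * star f = d • r := by
    rw [← hd, ← mul_assoc, hrf, mul_assoc, hfr]
  have h3 : f * s = f := mul_self_of_star_mul hs.proj h1
  have h4 : (f * star f) * (f * star f) = f * star f := by
    rw [mul_assoc, ← mul_assoc (star f), h1, ← mul_assoc, h3]
  have hf0 : f ≠ 0 := by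
    intro h0; rw [h0] at h1; simp at h1; exact hs.ne h1.symm
  rw [h2, smul_mul_smul_comm, hr.proj.mm] at h4
  have h5 := smul_left_injective ℂ hr.ne h4
  have hd0 : d ≠ 0 := by
    rintro rfl
    rw [zero_smul] at h2
    exact hf0 (CStarRing.mul_star_self_eq_zero_iff f |>.mp h2)
  have : d = 1 := mul_left_cancel₀ hd0 (by simpa using h5)
  rw [h2, this, one_smul]

end

end AFP


namespace AFP

section Bside
variable {B : Type*} [CStarAlgebra B]

lemma prime_of_simple (hs : IsSimpleCStarAlgebra B) (x y : B) (hx : x ≠ 0) (hy : y ≠ 0) :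
    ∃ b, x * b * y ≠ 0 := by
  by_contra hcon
  push Not at hcon
  let I : TwoSidedIdeal B := TwoSidedIdeal.mk' {z | ∀ b, x * b * z = 0}
    (by simp) (fun {a c} ha hc b => by rw [mul_add, ha b, hc b, add_zero])
    (fun {a} ha b => by rw [mul_neg, ha b, neg_zero])
    (fun {a c} hc b => by rw [← mul_assoc, mul_assoc x]; exact hc _)
    (fun {a c} ha b => by rw [← mul_assoc, ha b, zero_mul])
  have hI : ∀ z, z ∈ I ↔ ∀ b, x * b * z = 0 := fun z => by
    simp only [I]; rw [TwoSidedIdeal.mem_mk']; rfl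
  have hcl : IsClosed (I : Set B) := by
    have : (I : Set B) = ⋂ b, {z | x * b * z = 0} := by
      ext z; simp [hI]
    rw [this]
    exact isClosed_iInter fun b => isClosed_eq (by fun_prop) continuous_const
  rcases hs I hcl with h | h
  · have : y ∈ I := (hI y).mpr hcon
    rw [h] at this
    exact hy ((TwoSidedIdeal.mem_bot B).mp this)
  · have : (1 : B) ∈ I := by rw [h]; trivial
    have := (hI 1).mp this 1
    simp at this; exact hx this

lemma exists_mem_ne (hs : IsSimpleCStarAlgebra B) (S : ℕ → NonUnitalStarSubalgebra ℂ B)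
    (hS : IsAFPresentation B S) (x y : B) (hx : x ≠ 0) (hy : y ≠ 0) :
    ∃ k, ∃ b ∈ S k, x * b * y ≠ 0 := by
  by_contra hcon
  push Not at hcon
  obtain ⟨b, hb⟩ := prime_of_simple hs x y hx hy
  apply hb
  have hcl : IsClosed {b | x * b * y = 0} := isClosed_eq (by fun_prop) continuous_const
  have : (Set.univ : Set B) ⊆ {b | x * b * y = 0} := by
    rw [← hS.2.2.closure_eq]
    refine closure_minimal ?_ hcl
    intro z hz
    obtain ⟨k, hk⟩ := Set.mem_iUnion.mp hz
    exact hcon k z hk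
  exact this (Set.mem_univ b)

lemma not_scal (hs : IsSimpleCStarAlgebra B) (hinf : ¬ FiniteDimensional ℂ B) (r : B) (hr0 : r ≠ 0)
    (hscal : ∀ b, ∃ c : ℂ, r * b * r = c • r) : False := by
  let V : Submodule ℂ B := Submodule.span ℂ {z | ∃ x y, z = x * r * y}
  have hVl : ∀ a z, z ∈ V → a * z ∈ V := by
    intro a z hz
    induction hz using Submodule.span_induction with
    | mem z hz =>
      obtain ⟨x, y, rfl⟩ := hz
      exact Submodule.subset_span ⟨a * x, y, by simp only [mul_assoc]⟩
    | zero => simp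
    | add z w _ _ h1 h2 => rw [mul_add]; exact add_mem h1 h2
    | smul c z _ h => rw [mul_smul_comm]; exact V.smul_mem _ h
  have hVr : ∀ a z, z ∈ V → z * a ∈ V := by
    intro a z hz
    induction hz using Submodule.span_induction with
    | mem z hz =>
      obtain ⟨x, y, rfl⟩ := hz
      exact Submodule.subset_span ⟨x, y * a, by simp only [mul_assoc]⟩
    | zero => simp
    | add z w _ _ h1 h2 => rw [add_mul]; exact add_mem h1 h2
    | smul c z _ h => rw [smul_mul_assoc]; exact V.smul_mem _ h
  let I : TwoSidedIdeal B := TwoSidedIdeal.mk' (V.topologicalClosure : Set B)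
    (zero_mem _) (fun {a c} ha hc => add_mem ha hc)
    (fun {a} ha => neg_mem ha)
    (fun {a c} hc => map_mem_closure (f := fun z => a * z) (by fun_prop) hc (fun z hz => hVl a z hz))
    (fun {a c} ha => map_mem_closure (f := fun z => z * c) (by fun_prop) ha (fun z hz => hVr c z hz))
  have hI : (I : Set B) = closure (V : Set B) := by
    ext z
    change z ∈ I ↔ _
    exact TwoSidedIdeal.mem_mk' _ _ _ _ _ _ _
  have hone : (1 : B) ∈ closure (V : Set B) := by
    rcases hs I (by rw [hI]; exact isClosed_closure) with h | h
    · exfalso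
      have h1 : r ∈ (I : Set B) := by
        rw [hI]; exact subset_closure (Submodule.subset_span ⟨1, 1, by simp⟩)
      rw [h] at h1
      exact hr0 ((TwoSidedIdeal.mem_bot B).mp h1)
    · rw [← hI, h]; trivial
  obtain ⟨u, hu, hd⟩ := Metric.mem_closure_iff.mp hone 1 one_pos
  have hunit : IsUnit u := by
    have := isUnit_one_sub_of_norm_lt_one (x := 1 - u) (by rwa [← dist_eq_norm])
    simpa using this
  obtain ⟨n, f, g, hfg⟩ := Submodule.mem_span_set'.mp hu
  have hg : ∀ i, ∃ x y, (g i : B) = x * r * y := fun i => (g i).2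
  choose x y hxy using hg
  let W : Submodule ℂ B := Submodule.span ℂ (Set.range fun ij : Fin n × Fin n => x ij.1 * r * y ij.2)
  have : FiniteDimensional ℂ W := FiniteDimensional.span_of_finite ℂ (Set.finite_range _)
  have hW : ∀ b, u * b * u ∈ W := by
    intro b
    rw [← hfg]
    simp only [Finset.sum_mul, Finset.mul_sum]
    refine sum_mem fun i _ => sum_mem fun j _ => ?_
    simp only [smul_mul_assoc, mul_smul_comm]
    refine W.smul_mem _ (W.smul_mem _ ?_)
    rw [hxy, hxy]
    obtain ⟨c, hc⟩ := hscal (y j * b * x i)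
    have : x j * r * y j * b * (x i * r * y i) = c • (x j * r * y i) := by
      have : x j * r * y j * b * (x i * r * y i) = x j * (r * (y j * b * x i) * r) * y i := by
        simp only [mul_assoc]
      rw [this, hc]; simp
    rw [this]; exact W.smul_mem _ (Submodule.subset_span ⟨(j, i), rfl⟩)
  let L : B →ₗ[ℂ] W := LinearMap.codRestrict W
    (LinearMap.mulRight ℂ u ∘ₗ LinearMap.mulLeft ℂ u) (fun b => by simpa using hW b)
  apply hinf
  refine FiniteDimensional.of_injective L ?_
  intro a b hab
  have h1 : u * a * u = u * b * u := by
    have := congrArg Subtype.val hab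
    simpa [L] using this
  exact hunit.mul_left_cancel (hunit.mul_right_cancel h1)

lemma exists_subproj (hs : IsSimpleCStarAlgebra B) (hinf : ¬ FiniteDimensional ℂ B)
    (S : ℕ → NonUnitalStarSubalgebra ℂ B) (hS : IsAFPresentation B S)
    (n : ℕ) (r : B) (hr : r ∈ S n) (hrp : IsStarProjection r) (hr0 : r ≠ 0) :
    ∃ n', n ≤ n' ∧ ∃ s ∈ S n', IsStarProjection s ∧ s ≠ 0 ∧ s ≠ r ∧ r * s = s := by
  by_contra hcon
  push Not at hcon
  refine not_scal hs hinf r hr0 ?_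
  have h1 : ∀ m, n ≤ m → MinProj (S m) r := by
    intro m hm
    have := hS.2.1 m
    refine minProj_of (S m) r (hS.1 hm hr) hrp hr0 ?_
    intro s hs hsp hrs hs0
    by_contra hne
    exact hcon m hm s hs hsp hs0 hne hrs
  have hcl : IsClosed {b | r * b * r ∈ Submodule.span ℂ {r}} :=
    (Submodule.closed_of_finiteDimensional (Submodule.span ℂ {r})).preimage
      (f := fun b => r * b * r) (by fun_prop)
  have h2 : (Set.univ : Set B) ⊆ {b | r * b * r ∈ Submodule.span ℂ {r}} := by
    rw [← hS.2.2.closure_eq]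
    refine closure_minimal ?_ hcl
    intro z hz
    obtain ⟨k, hk⟩ := Set.mem_iUnion.mp hz
    obtain ⟨c, hc⟩ := (h1 (max n k) (le_max_left _ _)).scal z (hS.1 (le_max_right _ _) hk)
    exact Submodule.mem_span_singleton.mpr ⟨c, hc.symm⟩
  intro b
  obtain ⟨c, hc⟩ := Submodule.mem_span_singleton.mp (h2 (Set.mem_univ b))
  exact ⟨c, hc.symm⟩

lemma exists_orth (hs : IsSimpleCStarAlgebra B) (hinf : ¬ FiniteDimensional ℂ B)
    (S : ℕ → NonUnitalStarSubalgebra ℂ B) (hS : IsAFPresentation B S)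
    (M : ℕ) : ∀ (n : ℕ) (r : B), r ∈ S n → IsStarProjection r → r ≠ 0 →
    ∃ n', n ≤ n' ∧ ∃ e : Fin M → B, (∀ i, e i ∈ S n') ∧ (∀ i, IsStarProjection (e i)) ∧
      (∀ i, e i ≠ 0) ∧ (∀ i, r * e i = e i) ∧ (∀ i j, i ≠ j → e i * e j = 0) := by
  induction M with
  | zero =>
    intro n r _ _ _
    exact ⟨n, le_rfl, Fin.elim0, fun i => i.elim0, fun i => i.elim0, fun i => i.elim0,
      fun i => i.elim0, fun i => i.elim0⟩
  | succ M ih =>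
    intro n r hr hrp hr0
    obtain ⟨n1, hn1, s, hsS, hsp, hs0, hsr, hrs⟩ := exists_subproj hs hinf S hS n r hr hrp hr0
    have hsr' : s * r = s := by
      have := congrArg star hrs
      rwa [star_mul, hsp.ss, hrp.ss] at this
    have hq : IsStarProjection (r - s) := by
      refine ⟨?_, ?_⟩
      · simp [IsIdempotentElem, mul_sub, sub_mul, hrp.mm, hsp.mm, hrs, hsr']
      · simp [IsSelfAdjoint, hrp.ss, hsp.ss]
    obtain ⟨n2, hn2, e, he1, he2, he3, he4, he5⟩ := ih n1 (r - s) (sub_mem (hS.1 hn1 hr) hsS) hq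
      (fun h => hsr (sub_eq_zero.mp h).symm)
    have hse : ∀ i, s * e i = 0 := by
      intro i
      rw [← he4 i, ← mul_assoc, mul_sub, hsr', hsp.mm, sub_self, zero_mul]
    have hes : ∀ i, e i * s = 0 := by
      intro i
      have := congrArg star (hse i)
      rwa [star_mul, hsp.ss, (he2 i).ss, star_zero] at this
    refine ⟨n2, hn1.trans hn2, Fin.cons s e, ?_, ?_, ?_, ?_, ?_⟩
    · intro i; refine Fin.cases ?_ (fun i => ?_) i
      · exact hS.1 hn2 hsS
      · exact he1 i
    · intro i; refine Fin.cases ?_ (fun i => ?_) i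
      · exact hsp
      · exact he2 i
    · intro i; refine Fin.cases ?_ (fun i => ?_) i
      · exact hs0
      · exact he3 i
    · intro i; refine Fin.cases ?_ (fun i => ?_) i
      · exact hrs
      · simp only [Fin.cons_succ]
        rw [← he4 i, ← mul_assoc, mul_sub, hrp.mm, hrs]
    · intro i j
      refine Fin.cases ?_ (fun i => ?_) i <;> refine Fin.cases ?_ (fun j => ?_) j
      · intro h; exact absurd rfl h
      · intro _; exact hse j
      · intro _; exact hes i
      · intro h; exact he5 i j (fun hij => h (by rw [hij]))

lemma exists_common (hs : IsSimpleCStarAlgebra B)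
    (S : ℕ → NonUnitalStarSubalgebra ℂ B) (hS : IsAFPresentation B S)
    (M : ℕ) : ∀ (n : ℕ) (y0 : B), y0 ∈ S n → y0 ≠ 0 → ∀ e : Fin M → B,
    (∀ i, e i ∈ S n) → (∀ i, IsStarProjection (e i)) → (∀ i, e i ≠ 0) →
    ∃ n', n ≤ n' ∧ ∃ y ∈ S n', y ≠ 0 ∧ ∀ i, ∃ c, ∃ b ∈ S n', y = c * e i * b := by
  induction M with
  | zero =>
    intro n y0 hy hy0 e _ _ _
    exact ⟨n, le_rfl, y0, hy, hy0, fun i => i.elim0⟩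
  | succ M ih =>
    intro n y0 hy hy0 e he1 he2 he3
    obtain ⟨n1, hn1, y, hy1, hy2, hy3⟩ := ih n y0 hy hy0 (fun i => e i.succ)
      (fun i => he1 _) (fun i => he2 _) (fun i => he3 _)
    obtain ⟨k, b, hb, hne⟩ := exists_mem_ne hs S hS y (e 0) hy2 (he3 0)
    have hk1 : n1 ≤ max n1 k := le_max_left _ _
    have hk2 : k ≤ max n1 k := le_max_right _ _
    have he0 : e 0 ∈ S (max n1 k) := hS.1 (hn1.trans hk1) (he1 0)
    refine ⟨max n1 k, hn1.trans hk1, y * b * e 0,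
      mul_mem (mul_mem (hS.1 hk1 hy1) (hS.1 hk2 hb)) he0, hne, ?_⟩
    intro i
    refine Fin.cases ?_ (fun i => ?_) i
    · exact ⟨y * b, e 0, he0, by rw [mul_assoc (y * b), (he2 0).mm]⟩
    · obtain ⟨c, b', hb', h⟩ := hy3 i
      refine ⟨c, b' * b * e 0, mul_mem (mul_mem (hS.1 hk1 hb') (hS.1 hk2 hb)) he0, ?_⟩
      rw [h]; simp only [mul_assoc]

lemma lemB (hs : IsSimpleCStarAlgebra B) (hinf : ¬ FiniteDimensional ℂ B)
    (S : ℕ → NonUnitalStarSubalgebra ℂ B) (hS : IsAFPresentation B S)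
    (n N : ℕ) (q : B) (hq : MinProj (S n) q) (T : Type) [Finite T] [DecidableEq T] :
    ∃ n', N ≤ n' ∧ n ≤ n' ∧ ∃ (q' : B) (t : T → B), MinProj (S n') q' ∧ (∀ s, t s ∈ S n') ∧
      (∀ s, q * t s = t s) ∧ (∀ s s', star (t s) * t s' = if s = s' then q' else 0) := by
  obtain ⟨M, ⟨φ⟩⟩ := Finite.exists_equiv_fin T
  obtain ⟨n1, hn1, e, he1, he2, he3, he4, he5⟩ := exists_orth hs hinf S hS M n q hq.mem hq.proj hq.ne
  obtain ⟨n2, hn2, y, hy1, hy2, hy3⟩ := exists_common hs S hS M n1 q (hS.1 hn1 hq.mem) hq.ne e he1 he2 he3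
  have hfd := hS.2.1 (max N n2)
  have hm : n2 ≤ max N n2 := le_max_right _ _
  have hy' : y ∈ S (max N n2) := hS.1 hm hy1
  obtain ⟨u, huS, hu, huu⟩ := exists_unit (S (max N n2))
  obtain ⟨R, _, r, hr1, hr2, hr3, hr4⟩ := exists_decomp (S (max N n2)) _ u rfl huS hu
  have hyu : y * u = y := by
    have := congrArg star (huu (star y) (star_mem hy'))
    rwa [star_mul, star_star, hu.ss] at this
  obtain ⟨s, hsne⟩ : ∃ s, y * r s ≠ 0 := by
    by_contra hcon
    push Not at hcon
    apply hy2
    rw [← hyu, ← hr3, Finset.mul_sum]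
    exact Finset.sum_eq_zero fun s _ => hcon s
  have hq' := hr1 s
  have ht : ∀ i : Fin M, ∃ x ∈ S (max N n2), ∃ b, x = e i * b ∧ star x * x = r s := by
    intro i
    obtain ⟨c, b, hb, hyb⟩ := hy3 i
    have hx0 : e i * b * r s ≠ 0 := by
      intro h0
      apply hsne
      rw [hyb, mul_assoc c, mul_assoc c, h0, mul_zero]
    have hxm : e i * b * r s ∈ S (max N n2) :=
      mul_mem (mul_mem (hS.1 (hn2.trans hm) (he1 i)) (hS.1 hm hb)) hq'.mem
    obtain ⟨d, hd, h1⟩ := exists_normalize (S (max N n2)) (r s) (e i * b * r s) hq' hxm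
      (by rw [mul_assoc, hq'.proj.mm]) hx0
    exact ⟨_, SMulMemClass.smul_mem _ hxm, d • (b * r s),
      by rw [mul_smul_comm, mul_assoc], h1⟩
  choose x hx1 b hx2 hx3 using ht
  refine ⟨max N n2, le_max_left _ _, hn1.trans (hn2.trans hm), r s, fun a => x (φ a), hq',
    fun a => hx1 _, fun a => ?_, fun a a' => ?_⟩
  · change q * x (φ a) = x (φ a)
    rw [hx2, ← mul_assoc, he4]
  · split_ifs with h
    · rw [h]; exact hx3 _
    · change star (x (φ a)) * x (φ a') = 0
      rw [hx2, hx2 (φ a'), star_mul, (he2 _).ss, mul_assoc, ← mul_assoc (e _) (e _),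
        he5 _ _ (fun h' => h (φ.injective h'))]
      simp

end Bside
end AFP


namespace AFP

section Aside
variable {A : Type*} [NonUnitalCStarAlgebra A]

/-- coefficient matrices -/
noncomputable def coefMap {ι : Type} (v w : ι → A) (l : ι → (A →ₗ[ℂ] ℂ)) : A →ₗ[ℂ] Matrix ι ι ℂ where
  toFun x := Matrix.of fun a b => l a (star (v a) * x * w b)
  map_add' x y := by ext a b; simp [mul_add, add_mul]
  map_smul' c x := by ext a b; simp [mul_smul_comm, smul_mul_assoc]

lemma exists_dual {x : A} (hx : x ≠ 0) : ∃ l : A →ₗ[ℂ] ℂ, l x = 1 := by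
  obtain ⟨l, hl⟩ := SeparatingDual.exists_eq_one (R := ℂ) hx
  exact ⟨l.toLinearMap, hl⟩

/-- systems of matrix units, in column form -/
structure Sys (F : NonUnitalStarSubalgebra ℂ A) {ι κ : Type} [Fintype ι]
    (blk : ι → κ) (p : κ → A) (e : ι → A) : Prop where
  min : ∀ k, MinProj F (p k)
  orth : ∀ i j, i ≠ j → ∀ x ∈ F, p i * x * p j = 0
  mem : ∀ a, e a ∈ F
  ee : ∀ a, star (e a) * e a = p (blk a)
  eo : ∀ a b, a ≠ b → star (e a) * e b = 0
  tot : ∀ x ∈ F, (∑ a, e a * star (e a)) * x = x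

/-- coefficient matrix of elements of `F` -/
def IsCoef (F : NonUnitalStarSubalgebra ℂ A) {ι κ : Type}
    (blk : ι → κ) (p : κ → A) (e : ι → A) (C : A →ₗ[ℂ] Matrix ι ι ℂ) : Prop :=
  ∀ x ∈ F, ∀ a b, star (e a) * x * e b = C x a b • p (blk a)

lemma norm_le_of_hom {X Y : Type*} [NonUnitalCStarAlgebra X] [NonUnitalCStarAlgebra Y] (f : X → Y)
    (hadd : ∀ x y, f (x + y) = f x + f y) (hsmul : ∀ (c : ℂ) x, f (c • x) = c • f x)
    (hmul : ∀ x y, f (x * y) = f x * f y) (hstar : ∀ x, f (star x) = star (f x)) (x : X) :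
    ‖f x‖ ≤ ‖x‖ := by
  let φ : X →⋆ₙₐ[ℂ] Y :=
    { toFun := f
      map_smul' := hsmul
      map_zero' := by simpa using hsmul 0 0
      map_add' := hadd
      map_mul' := hmul
      map_star' := hstar }
  exact NonUnitalStarAlgHom.norm_apply_le φ x

namespace Sys
variable {F : NonUnitalStarSubalgebra ℂ A} {ι κ : Type} [Fintype ι]
    {blk : ι → κ} {p : κ → A} {e : ι → A}

lemma ep (h : Sys F blk p e) (a : ι) : e a * p (blk a) = e a :=
  mul_self_of_star_mul (h.min _).proj (h.ee a)

lemma pe (h : Sys F blk p e) (a : ι) : p (blk a) * star (e a) = star (e a) := by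
  have := congrArg star (h.ep a)
  rwa [star_mul, (h.min _).proj.ss] at this

lemma tot' (h : Sys F blk p e) (x : A) (hx : x ∈ F) : x * (∑ a, e a * star (e a)) = x := by
  have := congrArg star (h.tot (star x) (star_mem hx))
  simpa [star_mul, star_sum] using this

lemma pp (h : Sys F blk p e) (i j : κ) (hij : i ≠ j) : p i * p j = 0 := by
  have := h.orth i j hij (p i) (h.min i).mem
  rwa [(h.min i).proj.mm] at this

lemma off (h : Sys F blk p e) (a b : ι) (hab : blk a ≠ blk b) (x : A) (hx : x ∈ F) :
    star (e a) * x * e b = 0 := by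
  rw [← h.pe a, ← h.ep b]
  have : p (blk a) * star (e a) * x * (e b * p (blk b)) =
    p (blk a) * (star (e a) * x * e b) * p (blk b) := by simp only [mul_assoc]
  rw [this]
  exact h.orth _ _ hab _ (mul_mem (mul_mem (star_mem (h.mem a)) hx) (h.mem b))

lemma exists_coef (h : Sys F blk p e) : ∃ C, IsCoef F blk p e C := by
  have hl : ∀ k, ∃ l : A →ₗ[ℂ] ℂ, l (p k) = 1 := fun k => exists_dual (h.min k).ne
  choose l hl using hl
  refine ⟨coefMap e e fun a => l (blk a), fun x hx a b => ?_⟩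
  have hd : ∃ c : ℂ, star (e a) * x * e b = c • p (blk a) := by
    by_cases hab : blk a = blk b
    · obtain ⟨c, hc⟩ := (h.min (blk a)).scal (star (e a) * x * e b)
        (mul_mem (mul_mem (star_mem (h.mem a)) hx) (h.mem b))
      refine ⟨c, ?_⟩
      rw [← hc]
      simp only [← mul_assoc, h.pe]
      rw [mul_assoc _ (e b), hab, h.ep]
    · exact ⟨0, by rw [h.off a b hab x hx, zero_smul]⟩
  obtain ⟨c, hc⟩ := hd
  simp [coefMap, hc, hl]

lemma coef_off (h : Sys F blk p e) {C} (hC : IsCoef F blk p e C) (x : A) (hx : x ∈ F) (a b : ι)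
    (hab : blk a ≠ blk b) : C x a b = 0 := by
  have := hC x hx a b
  rw [h.off a b hab x hx] at this
  exact (smul_eq_zero.mp this.symm).resolve_right (h.min _).ne

lemma expand (h : Sys F blk p e) (x : A) (hx : x ∈ F) :
    x = ∑ a, ∑ b, e a * (star (e a) * x * e b) * star (e b) := by
  have h1 : x = (∑ a, e a * star (e a)) * x * (∑ a, e a * star (e a)) := by
    rw [h.tot x hx, h.tot' x hx]
  conv_lhs => rw [h1]
  rw [Finset.sum_mul, Finset.sum_mul]
  refine Finset.sum_congr rfl fun a _ => ?_
  rw [Finset.mul_sum]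
  refine Finset.sum_congr rfl fun b _ => ?_
  simp only [mul_assoc]

lemma ext (h : Sys F blk p e) (x y : A) (hx : x ∈ F) (hy : y ∈ F)
    (hxy : ∀ a b, star (e a) * x * e b = star (e a) * y * e b) : x = y := by
  rw [h.expand x hx, h.expand y hy]
  simp only [hxy]

lemma recon (h : Sys F blk p e) {C} (hC : IsCoef F blk p e C) (x : A) (hx : x ∈ F) :
    x = ∑ a, ∑ b, C x a b • (e a * star (e b)) := by
  conv_lhs => rw [h.expand x hx]
  refine Finset.sum_congr rfl fun a _ => Finset.sum_congr rfl fun b _ => ?_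
  rw [hC x hx, mul_smul_comm, smul_mul_assoc, h.ep]

open scoped Matrix.Norms.L2Operator in
lemma norm_coef [DecidableEq ι] (h : Sys F blk p e) [FiniteDimensional ℂ F] {C} (hC : IsCoef F blk p e C) (x : A)
    (hx : x ∈ F) : ‖C x‖ ≤ ‖x‖ := by
  have hcl : IsClosed (F : Set A) := isClosed_of_fd F
  refine norm_le_of_hom (X := F) (Y := Matrix ι ι ℂ) (fun x : F => C x) ?_ ?_ ?_ ?_ ⟨x, hx⟩
  · intro x y; exact map_add C _ _
  · intro c x; exact map_smul C _ _
  · intro x y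
    ext a c
    apply smul_left_injective ℂ (h.min (blk a)).ne
    simp only
    rw [← hC _ (x * y).2, Matrix.mul_apply, Finset.sum_smul]
    have : star (e a) * (x * y : F) * e c
        = ∑ b, star (e a) * x * e b * (star (e b) * y * e c) := by
      have h1 : ((x * y : F) : A) = x * ((∑ a, e a * star (e a)) * y) := by
        rw [h.tot y y.2]; rfl
      rw [h1, Finset.sum_mul, Finset.mul_sum, Finset.mul_sum, Finset.sum_mul]
      simp only [mul_assoc]
    rw [this]
    refine Finset.sum_congr rfl fun b _ => ?_
    rw [hC x x.2, hC y y.2]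
    by_cases hab : blk a = blk b
    · rw [← hab, smul_mul_smul_comm, (h.min _).proj.mm]
    · rw [h.coef_off hC x x.2 a b hab]; simp
  · intro x
    ext a b
    rw [Matrix.star_apply]
    by_cases hab : blk a = blk b
    · apply smul_left_injective ℂ (h.min (blk a)).ne
      simp only
      rw [← hC _ (star x).2]
      have h1 := congrArg star (hC x x.2 b a)
      rw [star_mul, star_mul, star_star, star_smul, (h.min _).proj.ss, ← mul_assoc] at h1
      rw [hab]; exact h1
    · rw [h.coef_off hC _ (star x).2 a b hab, h.coef_off hC x x.2 b a (Ne.symm hab), star_zero] 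

end Sys

end Aside
end AFP


namespace AFP

section Astep
variable {A : Type*} [NonUnitalCStarAlgebra A]

lemma EqvIn.refl {G : NonUnitalStarSubalgebra ℂ A} {r : A} (hr : MinProj G r) : EqvIn G r r :=
  ⟨r, hr.mem, by rw [hr.proj.ss, hr.proj.mm], by rw [hr.proj.ss, hr.proj.mm]⟩

lemma EqvIn.symm {G : NonUnitalStarSubalgebra ℂ A} {r s : A} (h : EqvIn G r s) : EqvIn G s r := by
  obtain ⟨f, hf, h1, h2⟩ := h
  exact ⟨star f, star_mem hf, by rw [star_star, h2], by rw [star_star, h1]⟩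

lemma EqvIn.trans {G : NonUnitalStarSubalgebra ℂ A} {r s t : A} (hr : MinProj G r)
    (ht : MinProj G t) (h : EqvIn G r s) (h' : EqvIn G s t) : EqvIn G r t := by
  obtain ⟨f, hf, h1, h2⟩ := h
  obtain ⟨g, hg, h3, h4⟩ := h'
  have e1 : star f * r = star f := mul_self_of_star_mul hr.proj (by rw [star_star, h1])
  have e2 : g * t = g := mul_self_of_star_mul ht.proj h4
  refine ⟨f * g, mul_mem hf hg, ?_, ?_⟩
  · rw [star_mul, mul_assoc, ← mul_assoc g, h3, ← h2, mul_assoc (star f), h1, e1, h1]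
  · rw [star_mul, mul_assoc, ← mul_assoc (star f), h2, ← h3, mul_assoc g, h4, e2, h4]

lemma sum_sub {ι S κ M : Type*} [Fintype ι] [Fintype S] [DecidableEq κ] [AddCommMonoid M]
    (blk : ι → κ) (π : S → κ) (g : ι × S → M) :
    ∑ x : {x : ι × S // blk x.1 = π x.2}, g x =
      ∑ a, ∑ s, if blk a = π s then g (a, s) else 0 := by
  rw [← Fintype.sum_prod_type' (f := fun a s => if blk a = π s then g (a, s) else 0),
    ← Finset.sum_filter]
  exact (Finset.sum_subtype _ (by simp) g).symm

lemma exists_decomp_all (G : NonUnitalStarSubalgebra ℂ A) [FiniteDimensional ℂ G] {κ : Type}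
    [Fintype κ] [DecidableEq κ] (p : κ → A) (hp : ∀ k, p k ∈ G) (hpp : ∀ k, IsStarProjection (p k))
    (ho : ∀ i j, i ≠ j → p i * p j = 0) :
    ∃ (S : Type) (_ : Fintype S) (π : S → κ) (r : S → A), (∀ s, MinProj G (r s)) ∧
      (∀ s t, s ≠ t → r s * r t = 0) ∧ (∀ k, (∑ s, if k = π s then r s else 0) = p k) ∧
      (∀ s, p (π s) * r s = r s) := by
  have h := fun k => exists_decomp G _ (p k) rfl (hp k) (hpp k)
  choose S hS r h1 h2 h3 h4 using h
  have hrp : ∀ k s, r k s * p k = r k s := by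
    intro k s
    have := congrArg star (h4 k s)
    rwa [star_mul, (hpp k).ss, (h1 k s).proj.ss] at this
  refine ⟨Σ k, S k, inferInstance, Sigma.fst, fun s => r s.1 s.2, fun s => h1 _ _, ?_, ?_,
    fun s => h4 _ _⟩
  · rintro ⟨k, s⟩ ⟨l, t⟩ hst
    by_cases hkl : k = l
    · subst hkl
      exact h2 k s t (fun h => hst (by rw [h]))
    · change r k s * r l t = 0
      rw [← hrp, ← h4 l t, mul_assoc, ← mul_assoc (p k), ho k l hkl]; simp
  · intro k
    rw [Fintype.sum_sigma, Finset.sum_eq_single k]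
    · simp [h3]
    · intro l _ hl; simp [Ne.symm hl]
    · simp

theorem A_step {F G : NonUnitalStarSubalgebra ℂ A} [FiniteDimensional ℂ G] (hFG : F ≤ G)
    {ι κ : Type} [Fintype ι] [Fintype κ] [DecidableEq κ]
    {blk : ι → κ} {p : κ → A} {e : ι → A} (h : Sys F blk p e) :
    ∃ (S D κ' : Type) (_ : Fintype S) (_ : Fintype D) (_ : Fintype κ') (π : S → κ) (f : S → A)
      (g : D → A) (bS : S → κ') (bD : D → κ') (p' : κ' → A),
      Function.Surjective π ∧ (∀ s, p (π s) * f s = f s) ∧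
      (∀ s s', s ≠ s' → star (f s) * f s' = 0) ∧
      (∀ s, star (f s) * f s = p' (bS s)) ∧
      (∀ d, ∀ x ∈ F, star (g d) * x = 0) ∧
      Sys G (ι := {x : ι × S // blk x.1 = π x.2} ⊕ D) (κ := κ')
        (Sum.elim (fun x => bS x.1.2) bD) p' (Sum.elim (fun x => e x.1.1 * f x.1.2) g) := by
  classical
  obtain ⟨S, _, π, r, hr1, hr2, hr3, hr4⟩ := exists_decomp_all G p (fun k => hFG (h.min k).mem)
    (fun k => (h.min k).proj) h.pp
  obtain ⟨u, huG, hu, hux⟩ := exists_unit G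
  have hxu : ∀ x ∈ G, x * u = x := by
    intro x hx
    have := congrArg star (hux (star x) (star_mem hx))
    rwa [star_mul, star_star, hu.ss] at this
  set E : A := ∑ a, e a * star (e a) with hE
  have hEF : E ∈ F := sum_mem fun a _ => mul_mem (h.mem a) (star_mem (h.mem a))
  have hEE : E * E = E := h.tot E hEF
  have hEs : star E = E := by simp [hE]
  have hu' : IsStarProjection (u - E) := by
    refine ⟨?_, ?_⟩
    · simp [IsIdempotentElem, mul_sub, sub_mul, hu.mm, hEE, hux E (hFG hEF), hxu E (hFG hEF)]
    · simp [IsSelfAdjoint, hu.ss, hEs]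
  have hxu' : ∀ x ∈ F, x * (u - E) = 0 := by
    intro x hx
    rw [mul_sub, hxu x (hFG hx), h.tot' x hx, sub_self]
  obtain ⟨D, _, rd, hd1, hd2, hd3, hd4⟩ := exists_decomp G _ (u - E) rfl (sub_mem huG (hFG hEF)) hu'
  have hxd : ∀ x ∈ F, ∀ d, x * rd d = 0 := by
    intro x hx d
    rw [← hd4, ← mul_assoc, hxu' x hx, zero_mul]
  let R : S ⊕ D → A := Sum.elim r rd
  have hR : ∀ α, MinProj G (R α) := by rintro (s | d); exacts [hr1 s, hd1 d]
  have hsd : ∀ s d, r s * rd d = 0 := by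
    intro s d
    have : r s * p (π s) = r s := by
      have := congrArg star (hr4 s)
      rwa [star_mul, (h.min _).proj.ss, (hr1 s).proj.ss] at this
    rw [← this, mul_assoc, hxd _ (h.min _).mem, mul_zero]
  have hRo : ∀ α β, α ≠ β → R α * R β = 0 := by
    rintro (s | d) (t | d') hne
    · exact hr2 s t (fun h => hne (by rw [h]))
    · exact hsd s d'
    · have := congrArg star (hsd t d)
      rw [star_mul, (hr1 t).proj.ss, (hd1 d).proj.ss] at this
      exact this.trans (star_zero A)
    · exact hd2 d d' (fun h => hne (by rw [h]))
  let st : Setoid (S ⊕ D) :=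
    { r := fun α β => EqvIn G (R α) (R β)
      iseqv := ⟨fun α => EqvIn.refl (hR α), fun h => h.symm,
        fun {α β γ} h h' => EqvIn.trans (hR α) (hR γ) h h'⟩ }
  let p' : Quotient st → A := fun k => R k.out
  have hf : ∀ α, EqvIn G (R α) (p' (Quotient.mk st α)) := fun α =>
    (Quotient.mk_out (s := st) α : EqvIn G _ _).symm
  choose f hfG hf1 hf2 using hf
  have hRf : ∀ α, R α * f α = f α := by
    intro α
    have := mul_self_of_star_mul (v := star (f α)) (hR α).proj (by rw [star_star, hf1])
    have := congrArg star this
    rwa [star_mul, star_star, (hR α).proj.ss] at this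
  have hfR : ∀ α, star (f α) * R α = star (f α) := fun α =>
    mul_self_of_star_mul (v := star (f α)) (hR α).proj (by rw [star_star, hf1])
  have hfo : ∀ α β, α ≠ β → star (f α) * f β = 0 := by
    intro α β hne
    rw [← hfR, ← hRf β, mul_assoc, ← mul_assoc (R α), hRo α β hne]; simp
  have hpf : ∀ s, p (π s) * f (Sum.inl s) = f (Sum.inl s) := by
    intro s
    rw [← hRf, ← mul_assoc]; congr 1; exact hr4 s
  have hxf : ∀ x ∈ F, ∀ d, x * f (Sum.inr d) = 0 := by
    intro x hx d
    rw [← hRf, ← mul_assoc]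
    have : x * R (Sum.inr d) = 0 := hxd x hx d
    rw [this, zero_mul]
  have hfx : ∀ d, ∀ x ∈ F, star (f (Sum.inr d)) * x = 0 := by
    intro d x hx
    have := congrArg star (hxf (star x) (star_mem hx) d)
    simpa using this
  refine ⟨S, D, Quotient st, inferInstance, inferInstance, inferInstance, π, fun s => f (Sum.inl s),
    fun d => f (Sum.inr d), fun s => Quotient.mk st (Sum.inl s), fun d => Quotient.mk st (Sum.inr d),
    p', ?_, hpf, ?_, fun s => hf2 _, hfx, ?_⟩
  · intro k
    by_contra hcon
    push Not at hcon
    apply (h.min k).ne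
    rw [← hr3 k]
    exact Finset.sum_eq_zero fun s _ => by rw [if_neg (Ne.symm (hcon s))]
  · intro s s' hne
    exact hfo _ _ (fun h => hne (Sum.inl_injective h))
  · refine ⟨fun k => hR _, ?_, ?_, ?_, ?_, ?_⟩
    · intro i j hij x hx
      by_contra hne
      apply hij
      have := eqv_of_ne G _ _ x (hR i.out) (hR j.out) hx hne
      rw [← Quotient.out_eq i, ← Quotient.out_eq j]
      exact Quotient.sound (s := st) this
    · rintro (x | d)
      · exact mul_mem (hFG (h.mem _)) (hfG _)
      · exact hfG _
    · rintro (⟨⟨a, s⟩, hx⟩ | d)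
      · simp only [Sum.elim_inl] at hx ⊢
        rw [star_mul, mul_assoc, ← mul_assoc (star (e a)), h.ee, hx, hpf, hf2]
      · exact hf2 _
    · rintro (⟨⟨a, s⟩, hx⟩ | d) (⟨⟨b, t⟩, hy⟩ | d') hne
      · simp only [Sum.elim_inl] at hx hy ⊢
        rw [star_mul, mul_assoc, ← mul_assoc (star (e a))]
        by_cases hab : a = b
        · subst hab
          rw [h.ee, hy, hpf]
          refine hfo _ _ ?_
          rintro ⟨⟩
          exact hne rfl
        · rw [h.eo a b hab]; simp
      · simp only [Sum.elim_inl, Sum.elim_inr]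
        rw [star_mul, mul_assoc, hxf _ (star_mem (h.mem a)), mul_zero]
      · simp only [Sum.elim_inl, Sum.elim_inr]
        rw [← mul_assoc, hfx _ _ (h.mem b), zero_mul]
      · exact hfo _ _ (fun h => hne (by rw [Sum.inr_injective h]))
    · intro x hx
      have : (∑ α, (Sum.elim (fun x : {x : ι × S // blk x.1 = π x.2} => e x.1.1 * f (Sum.inl x.1.2))
          (fun d => f (Sum.inr d)) α) * star (Sum.elim (fun x : {x : ι × S // blk x.1 = π x.2} =>
            e x.1.1 * f (Sum.inl x.1.2)) (fun d => f (Sum.inr d)) α)) = u := by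
        rw [Fintype.sum_sum_type]
        simp only [Sum.elim_inl, Sum.elim_inr, hf1]
        have h1 : ∑ d, R (Sum.inr d) = u - E := hd3
        rw [h1]
        have h2 : (∑ x : {x : ι × S // blk x.1 = π x.2}, e x.1.1 * f (Sum.inl x.1.2) *
            star (e x.1.1 * f (Sum.inl x.1.2))) = E := by
          rw [sum_sub blk π (fun x => e x.1 * f (Sum.inl x.2) * star (e x.1 * f (Sum.inl x.2)))]
          rw [hE]
          refine Finset.sum_congr rfl fun a _ => ?_
          have h3 : ∀ s, (if blk a = π s then e a * f (Sum.inl s) * star (e a * f (Sum.inl s)) else 0)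
              = e a * (if blk a = π s then r s else 0) * star (e a) := by
            intro s
            split_ifs
            · rw [star_mul, mul_assoc, ← mul_assoc (f _), hf1, ← mul_assoc]; rfl
            · simp
          simp only [h3]
          rw [← Finset.sum_mul, ← Finset.mul_sum, hr3, h.ep]
        rw [h2]; abel
      rw [this, hux x hx]

end Astep
end AFP


namespace AFP

section Build

/-- reconstruction map -/
noncomputable def recMap {X Y : Type*} [AddCommGroup X] [Module ℂ X] [NonUnitalCStarAlgebra Y]
    {ι : Type} [Fintype ι] (K : X →ₗ[ℂ] Matrix ι ι ℂ) (y z : ι → Y) : X →ₗ[ℂ] Y where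
  toFun x := ∑ a, ∑ b, K x a b • (y a * star (z b))
  map_add' x x' := by simp [add_smul, Finset.sum_add_distrib]
  map_smul' c x := by simp [Finset.smul_sum, smul_smul]

lemma recMap_apply {X Y : Type*} [AddCommGroup X] [Module ℂ X] [NonUnitalCStarAlgebra Y]
    {ι : Type} [Fintype ι] (K : X →ₗ[ℂ] Matrix ι ι ℂ) (y z : ι → Y) (x : X) :
    recMap K y z x = ∑ a, ∑ b, K x a b • (y a * star (z b)) := rfl

/-- orthonormal columns -/
structure Cols {B : Type*} [NonUnitalCStarAlgebra B] (H : NonUnitalStarSubalgebra ℂ B) (q : B)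
    {ι : Type} (v : ι → B) : Prop where
  mem : ∀ a, v a ∈ H
  vv : ∀ a, star (v a) * v a = q
  vo : ∀ a b, a ≠ b → star (v a) * v b = 0

variable {A B : Type*} [NonUnitalCStarAlgebra A] [CStarAlgebra B]

/-- the inductive data -/
structure Stage (F : NonUnitalStarSubalgebra ℂ A) (H : NonUnitalStarSubalgebra ℂ B)
    (γ : A →ₗ[ℂ] B) (δ : B →ₗ[ℂ] A) {ι κ : Type} [Fintype ι]
    (blk : ι → κ) (p : κ → A) (e : ι → A) (C : A →ₗ[ℂ] Matrix ι ι ℂ)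
    (q : B) (v w : ι → B) (v0 w0 : B) (K : B →ₗ[ℂ] Matrix ι ι ℂ) : Prop where
  sys : Sys F blk p e
  coef : IsCoef F blk p e C
  hq : MinProj H q
  hv : Cols H q v
  hw : Cols H q w
  v0m : v0 ∈ H
  v0q : star v0 * v0 = q
  w0m : w0 ∈ H
  w0q : star w0 * w0 = q
  γm : ∀ x ∈ F, γ x ∈ H
  γn : ∀ x ∈ F, ‖γ x‖ ≤ ‖x‖
  γw : ∀ x ∈ F, ∀ b, γ x * w b = ∑ a, C x a b • v a
  vγ : ∀ x ∈ F, ∀ a, star (v a) * γ x = ∑ b, C x a b • star (w b)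
  v0γ : ∀ x ∈ F, star v0 * γ x = 0
  γw0 : ∀ x ∈ F, γ x * w0 = 0
  hK : ∀ h ∈ H, ∀ a b, star (v a) * h * w b = K h a b • q
  hδ : δ = recMap K e e

lemma Cols.vq {H : NonUnitalStarSubalgebra ℂ B} {q : B} {ι : Type} {v : ι → B} (hv : Cols H q v)
    (hq : MinProj H q) (a : ι) : v a * q = v a := mul_self_of_star_mul hq.proj (hv.vv a)

lemma Cols.Pv {H : NonUnitalStarSubalgebra ℂ B} {q : B} {ι : Type} [Fintype ι] {v : ι → B}
    (hv : Cols H q v) (hq : MinProj H q) (b : ι) : (∑ a, v a * star (v a)) * v b = v b := by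
  classical
  rw [Finset.sum_mul, Finset.sum_eq_single b]
  · rw [mul_assoc, hv.vv, hv.vq hq]
  · intro a _ hab; rw [mul_assoc, hv.vo a b hab, mul_zero]
  · simp

lemma Cols.Ps {ι : Type} [Fintype ι] {v : ι → B} :
    star (∑ a, v a * star (v a)) = ∑ a, v a * star (v a) := by simp

lemma Cols.vP {H : NonUnitalStarSubalgebra ℂ B} {q : B} {ι : Type} [Fintype ι] {v : ι → B}
    (hv : Cols H q v) (hq : MinProj H q) (b : ι) :
    star (v b) * (∑ a, v a * star (v a)) = star (v b) := by
  have := congrArg star (hv.Pv hq b)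
  rwa [star_mul, Cols.Ps] at this

lemma Cols.proj {H : NonUnitalStarSubalgebra ℂ B} {q : B} {ι : Type} [Fintype ι] {v : ι → B}
    (hv : Cols H q v) (hq : MinProj H q) : IsStarProjection (∑ a, v a * star (v a)) := by
  refine ⟨?_, Cols.Ps⟩
  rw [IsIdempotentElem]
  conv_lhs => rw [Finset.mul_sum]
  exact Finset.sum_congr rfl fun a _ => by rw [← mul_assoc, hv.Pv hq]

open scoped Matrix.Norms.L2Operator in
lemma Stage.δn {F : NonUnitalStarSubalgebra ℂ A} {H : NonUnitalStarSubalgebra ℂ B}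
    {γ : A →ₗ[ℂ] B} {δ : B →ₗ[ℂ] A} {ι κ : Type} [Fintype ι]
    {blk : ι → κ} {p : κ → A} {e : ι → A} {C : A →ₗ[ℂ] Matrix ι ι ℂ}
    {q : B} {v w : ι → B} {v0 w0 : B} {K : B →ₗ[ℂ] Matrix ι ι ℂ}
    (h : Stage F H γ δ blk p e C q v w v0 w0 K) (x : B) (hx : x ∈ H) : ‖δ x‖ ≤ ‖x‖ := by
  classical
  rw [h.hδ, recMap_apply]
  refine (norm_sum_le e e (fun a => p (blk a)) (fun a => p (blk a)) (fun a => (h.sys.min _).proj)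
    (fun a => (h.sys.min _).proj) h.sys.ee h.sys.eo h.sys.ee h.sys.eo (K x)).trans ?_
  exact norm_coeff_le v w q h.hq.proj h.hq.ne h.hv.vv h.hv.vo h.hw.vv h.hw.vo (K x) x (h.hK x hx)

lemma Stage.δγ {F : NonUnitalStarSubalgebra ℂ A} {H : NonUnitalStarSubalgebra ℂ B}
    {γ : A →ₗ[ℂ] B} {δ : B →ₗ[ℂ] A} {ι κ : Type} [Fintype ι]
    {blk : ι → κ} {p : κ → A} {e : ι → A} {C : A →ₗ[ℂ] Matrix ι ι ℂ}
    {q : B} {v w : ι → B} {v0 w0 : B} {K : B →ₗ[ℂ] Matrix ι ι ℂ}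
    (h : Stage F H γ δ blk p e C q v w v0 w0 K) (x : A) (hx : x ∈ F) : δ (γ x) = x := by
  classical
  have hKC : ∀ a b, K (γ x) a b = C x a b := by
    intro a b
    apply smul_left_injective ℂ h.hq.ne
    simp only
    rw [← h.hK _ (h.γm x hx), h.vγ x hx, Finset.sum_mul, Finset.sum_eq_single b]
    · rw [smul_mul_assoc, h.hw.vv]
    · intro c _ hcb; rw [smul_mul_assoc, h.hw.vo c b hcb, smul_zero]
    · simp
  conv_rhs => rw [h.sys.recon h.coef x hx]
  rw [h.hδ, recMap_apply]
  simp only [hKC]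

/-- compression of a map to a corner -/
noncomputable def cornerMap (P Q : B) (Y : A →ₗ[ℂ] B) : A →ₗ[ℂ] B where
  toFun x := (1 - P) * Y x * (1 - Q)
  map_add' x y := by simp only [map_add, mul_add, add_mul]
  map_smul' c x := by simp only [map_smul, mul_smul_comm, smul_mul_assoc, RingHom.id_apply]

/-- the new map -/
noncomputable def newγ {ι : Type} [Fintype ι] (C : A →ₗ[ℂ] Matrix ι ι ℂ) (v w : ι → B)
    (Y : A →ₗ[ℂ] B) : A →ₗ[ℂ] B :=
  recMap C v w + cornerMap (∑ a, v a * star (v a)) (∑ a, w a * star (w a)) Y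

lemma newγ_apply {ι : Type} [Fintype ι] (C : A →ₗ[ℂ] Matrix ι ι ℂ) (v w : ι → B)
    (Y : A →ₗ[ℂ] B) (x : A) : newγ C v w Y x = (∑ a, ∑ b, C x a b • (v a * star (w b))) +
      (1 - ∑ a, v a * star (v a)) * Y x * (1 - ∑ a, w a * star (w a)) := rfl

open scoped Matrix.Norms.L2Operator in
lemma build {G : NonUnitalStarSubalgebra ℂ A} [FiniteDimensional ℂ G]
    {H : NonUnitalStarSubalgebra ℂ B} {ι κ : Type} [Fintype ι]
    {blk : ι → κ} {p : κ → A} {e : ι → A} {C : A →ₗ[ℂ] Matrix ι ι ℂ}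
    {q : B} {v w : ι → B} {v0 w0 : B} (sys : Sys G blk p e) (coef : IsCoef G blk p e C)
    (hq : MinProj H q) (hv : Cols H q v) (hw : Cols H q w)
    (v0m : v0 ∈ H) (v0q : star v0 * v0 = q) (w0m : w0 ∈ H) (w0q : star w0 * w0 = q)
    (v0v : ∀ a, star v0 * v a = 0) (ww0 : ∀ a, star (w a) * w0 = 0)
    (Y : A →ₗ[ℂ] B) (hYn : ∀ x ∈ G, ‖Y x‖ ≤ ‖x‖) (hYm : ∀ x ∈ G, Y x ∈ H)
    (v0Y : ∀ x ∈ G, star v0 * Y x = 0) (Yw0 : ∀ x ∈ G, Y x * w0 = 0) :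
    ∃ K : B →ₗ[ℂ] Matrix ι ι ℂ,
      Stage G H (newγ C v w Y) (recMap K e e) blk p e C q v w v0 w0 K := by
  classical
  obtain ⟨l, hl⟩ := exists_dual hq.ne
  refine ⟨coefMap v w fun _ => l, sys, coef, hq, hv, hw, v0m, v0q, w0m, w0q, ?_, ?_, ?_, ?_, ?_, ?_,
    ?_, rfl⟩
  · intro x hx
    have hP : ∑ a, v a * star (v a) ∈ H := sum_mem fun a _ => mul_mem (hv.mem a) (star_mem (hv.mem a))
    have hQ : ∑ a, w a * star (w a) ∈ H := sum_mem fun a _ => mul_mem (hw.mem a) (star_mem (hw.mem a))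
    rw [newγ_apply]
    refine add_mem (sum_mem fun a _ => sum_mem fun b _ => SMulMemClass.smul_mem _
      (mul_mem (hv.mem a) (star_mem (hw.mem b)))) ?_
    rw [sub_mul, one_mul, mul_sub, mul_one]
    have hy := hYm x hx
    exact sub_mem (sub_mem hy (mul_mem hP hy)) (mul_mem (sub_mem hy (mul_mem hP hy)) hQ)
  · intro x hx
    rw [newγ_apply]
    refine norm_corner_add_le _ _ _ _ (hv.proj hq) (hw.proj hq) _ ?_ (hYn x hx) ?_ ?_
    · exact (norm_sum_le v w (fun _ => q) (fun _ => q) (fun _ => hq.proj) (fun _ => hq.proj)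
        hv.vv hv.vo hw.vv hw.vo _).trans (sys.norm_coef coef x hx)
    · conv_lhs => rw [Finset.mul_sum]
      refine Finset.sum_congr rfl fun a _ => ?_
      rw [Finset.mul_sum]
      refine Finset.sum_congr rfl fun b _ => ?_
      rw [mul_smul_comm, ← mul_assoc, hv.Pv hq]
    · conv_lhs => rw [Finset.sum_mul]
      refine Finset.sum_congr rfl fun a _ => ?_
      rw [Finset.sum_mul]
      refine Finset.sum_congr rfl fun b _ => ?_
      rw [smul_mul_assoc, mul_assoc, hw.vP hq]
  · intro x hx b
    rw [newγ_apply, add_mul, mul_assoc _ _ (w b), sub_mul 1 _ (w b), hw.Pv hq, one_mul, sub_self,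
      mul_zero, add_zero, Finset.sum_mul]
    refine Finset.sum_congr rfl fun a _ => ?_
    rw [Finset.sum_mul, Finset.sum_eq_single b]
    · rw [smul_mul_assoc, mul_assoc, hw.vv, hv.vq hq]
    · intro c _ hcb; rw [smul_mul_assoc, mul_assoc, hw.vo c b hcb, mul_zero, smul_zero]
    · simp
  · intro x hx a
    rw [newγ_apply, mul_add, mul_assoc (1 - _), ← mul_assoc (star (v a)) (1 - _), mul_sub, hv.vP hq,
      mul_one, sub_self, zero_mul, add_zero, Finset.mul_sum, Finset.sum_eq_single a]
    · rw [Finset.mul_sum]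
      refine Finset.sum_congr rfl fun b _ => ?_
      rw [mul_smul_comm, ← mul_assoc, hv.vv]
      have := congrArg star (hw.vq hq b)
      rw [star_mul, hq.proj.ss] at this
      rw [this]
    · intro c _ hca
      rw [Finset.mul_sum]
      exact Finset.sum_eq_zero fun b _ => by
        rw [mul_smul_comm, ← mul_assoc, hv.vo a c (Ne.symm hca), zero_mul, smul_zero]
    · simp
  · intro x hx
    have h1 : star v0 * (∑ a, ∑ b, C x a b • (v a * star (w b))) = 0 := by
      rw [Finset.mul_sum]
      refine Finset.sum_eq_zero fun a _ => ?_
      rw [Finset.mul_sum]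
      refine Finset.sum_eq_zero fun b _ => ?_
      rw [mul_smul_comm, ← mul_assoc, v0v, zero_mul, smul_zero]
    have h2 : star v0 * (∑ a, v a * star (v a)) = 0 := by
      rw [Finset.mul_sum]
      exact Finset.sum_eq_zero fun a _ => by rw [← mul_assoc, v0v, zero_mul]
    rw [newγ_apply, mul_add, h1, ← mul_assoc, ← mul_assoc, mul_sub (star v0) 1, h2, mul_one, sub_zero,
      v0Y x hx, zero_mul, zero_add]
  · intro x hx
    have h1 : (∑ a, ∑ b, C x a b • (v a * star (w b))) * w0 = 0 := by
      rw [Finset.sum_mul]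
      refine Finset.sum_eq_zero fun a _ => ?_
      rw [Finset.sum_mul]
      refine Finset.sum_eq_zero fun b _ => ?_
      rw [smul_mul_assoc, mul_assoc, ww0, mul_zero, smul_zero]
    have h2 : (∑ a, w a * star (w a)) * w0 = 0 := by
      rw [Finset.sum_mul]
      exact Finset.sum_eq_zero fun a _ => by rw [mul_assoc, ww0, mul_zero]
    rw [newγ_apply, add_mul, h1, mul_assoc, sub_mul 1 _ w0, h2, one_mul, sub_zero, mul_assoc,
      Yw0 x hx, mul_zero, zero_add]
  · intro h hh a b
    have hd : ∃ c : ℂ, star (v a) * h * w b = c • q := by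
      obtain ⟨c, hc⟩ := hq.scal (star (v a) * h * w b)
        (mul_mem (mul_mem (star_mem (hv.mem a)) hh) (hw.mem b))
      refine ⟨c, ?_⟩
      rw [← hc]
      have := congrArg star (hv.vq hq a)
      rw [star_mul, hq.proj.ss] at this
      simp only [← mul_assoc, this]
      rw [mul_assoc _ (w b), hw.vq hq]
    obtain ⟨c, hc⟩ := hd
    simp [coefMap, hc, hl]

lemma newγ_eq {ι : Type} [Fintype ι] {H : NonUnitalStarSubalgebra ℂ B} {C : A →ₗ[ℂ] Matrix ι ι ℂ}
    {q : B} {v w : ι → B} (hq : MinProj H q) (hw : Cols H q w)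
    (Y : A →ₗ[ℂ] B) (x : A) (y : B) (hY : Y x = y)
    (h1 : ∀ a, star (v a) * y = ∑ b, C x a b • star (w b))
    (h2 : ∀ b, y * w b = ∑ a, C x a b • v a) : newγ C v w Y x = y := by
  rw [newγ_apply, hY]
  set P := ∑ a, v a * star (v a)
  set Q := ∑ a, w a * star (w a)
  set X := ∑ a, ∑ b, C x a b • (v a * star (w b)) with hX
  have e1 : P * y = X := by
    simp only [P]
    rw [Finset.sum_mul]
    refine Finset.sum_congr rfl fun a _ => ?_
    rw [mul_assoc, h1, Finset.mul_sum]
    exact Finset.sum_congr rfl fun b _ => by rw [mul_smul_comm]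
  have e2 : y * Q = X := by
    simp only [Q]
    rw [Finset.mul_sum, hX, Finset.sum_comm]
    refine Finset.sum_congr rfl fun b _ => ?_
    rw [← mul_assoc, h2, Finset.sum_mul]
    exact Finset.sum_congr rfl fun a _ => by rw [smul_mul_assoc]
  have e3 : X * Q = X := by
    rw [← e2, mul_assoc, (hw.proj hq).mm]
  rw [sub_mul, one_mul, mul_sub, mul_one, sub_mul, e1, e2, e3]
  abel

end Build
end AFP


namespace AFP

section Step

open scoped Matrix.Norms.L2Operator in
lemma E_norm {A : Type*} [NonUnitalCStarAlgebra A] {F : NonUnitalStarSubalgebra ℂ A}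
    {ι κ ι' : Type} [Fintype ι] [Fintype ι'] [DecidableEq ι']
    {blk : ι → κ} {p : κ → A} {e : ι → A} (h : Sys F blk p e) (j : ι → ι')
    (hj : Function.Injective j) (M : Matrix ι' ι' ℂ) :
    ‖∑ a, ∑ b, M (j a) (j b) • (e a * star (e b))‖ ≤ ‖M‖ := by
  let e' : ι' → A := Function.extend j e 0
  have he : ∀ a, e' (j a) = e a := fun a => hj.extend_apply e 0 a
  have he0 : ∀ α, α ∉ Set.range j → e' α = 0 := fun α hα => by
    simp only [e']
    rw [Function.extend_apply' _ _ _ (fun ⟨a, ha⟩ => hα ⟨a, ha⟩)]; rfl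
  have hsum : ∑ a, ∑ b, M (j a) (j b) • (e a * star (e b)) =
      ∑ α, ∑ β, M α β • (e' α * star (e' β)) := by
    refine Fintype.sum_of_injective j hj _ _ ?_ ?_
    · intro α hα; simp [he0 α hα]
    · intro a
      refine Fintype.sum_of_injective j hj _ _ ?_ ?_
      · intro β hβ; simp [he0 β hβ]
      · intro b; rw [he, he]
  rw [hsum]
  have hp : ∀ α, IsStarProjection (star (e' α) * e' α) := by
    intro α
    by_cases hα : α ∈ Set.range j
    · obtain ⟨a, rfl⟩ := hα
      rw [he, h.ee]; exact (h.min _).proj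
    · rw [he0 α hα, mul_zero]; exact IsStarProjection.zero A
  have ho : ∀ α β, α ≠ β → star (e' α) * e' β = 0 := by
    intro α β hne
    by_cases hα : α ∈ Set.range j
    · by_cases hβ : β ∈ Set.range j
      · obtain ⟨a, rfl⟩ := hα
        obtain ⟨b, rfl⟩ := hβ
        rw [he, he, h.eo a b (fun hab => hne (by rw [hab]))]
      · rw [he0 β hβ, mul_zero]
    · rw [he0 α hα, star_zero, zero_mul]
  exact norm_sum_le e' e' _ _ hp hp (fun _ => rfl) ho (fun _ => rfl) ho M

lemma sum_col {ι S κ M : Type*} [Fintype ι] [Fintype S] [DecidableEq S] [AddCommGroup M] [Module ℂ M]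
    (blk : ι → κ) (π : S → κ) [Fintype {x : ι × S // blk x.1 = π x.2}]
    (s : S) (c : ι → ℂ) (hc : ∀ b, blk b ≠ π s → c b = 0) (z : ι → S → M) :
    ∑ β : {x : ι × S // blk x.1 = π x.2}, (if s = β.1.2 then c β.1.1 else 0) • z β.1.1 β.1.2
      = ∑ b, c b • z b s := by
  classical
  have h := sum_sub blk π (fun x => (if s = x.2 then c x.1 else 0) • z x.1 x.2)
  have h' : ∑ β : {x : ι × S // blk x.1 = π x.2}, (if s = β.1.2 then c β.1.1 else 0) • z β.1.1 β.1.2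
    = ∑ a, ∑ s', if blk a = π s' then ((if s = s' then c a else 0) • z a s') else 0 := by
    rw [← h]; congr!
  rw [h']
  refine Finset.sum_congr rfl fun b _ => ?_
  rw [Finset.sum_eq_single s]
  · by_cases hb : blk b = π s
    · simp [hb]
    · simp [hb, hc b hb]
  · intro t _ ht; simp [Ne.symm ht]
  · simp

lemma sand {A : Type*} [NonUnitalCStarAlgebra A] {F : NonUnitalStarSubalgebra ℂ A}
    {ι κ : Type} [Fintype ι] {blk : ι → κ} {p : κ → A} {e : ι → A} (h : Sys F blk p e)
    (M : Matrix ι ι ℂ) (a b : ι) :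
    star (e a) * (∑ a, ∑ b, M a b • (e a * star (e b))) * e b = M a b • (p (blk a) * p (blk b)) := by
  classical
  rw [Finset.mul_sum, Finset.sum_eq_single a, Finset.mul_sum, Finset.sum_mul, Finset.sum_eq_single b]
  · rw [mul_smul_comm, smul_mul_assoc, ← mul_assoc, h.ee, mul_assoc, h.ee]
  · intro c _ hc
    rw [mul_smul_comm, smul_mul_assoc, mul_assoc, mul_assoc, h.eo c b hc]; simp
  · simp
  · intro c _ hc
    rw [Finset.mul_sum]
    exact Finset.sum_eq_zero fun b _ => by
      rw [mul_smul_comm, ← mul_assoc, h.eo a c (Ne.symm hc)]; simp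
  · simp

variable {A B : Type*} [NonUnitalCStarAlgebra A] [CStarAlgebra B]

/-- new orthonormal vectors inside the old ones -/
structure Tee (H H' : NonUnitalStarSubalgebra ℂ B) (q q' : B) {T : Type} (t : T → B) : Prop where
  le : H ≤ H'
  hq : MinProj H q
  hq' : MinProj H' q'
  mem : ∀ i, t i ∈ H'
  qt : ∀ i, q * t i = t i
  tt : ∀ i, star (t i) * t i = q'
  tto : ∀ i j, i ≠ j → star (t i) * t j = 0

namespace Tee
variable {H H' : NonUnitalStarSubalgebra ℂ B} {q q' : B} {T : Type} {t : T → B}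

lemma same (h : Tee H H' q q' t) (x z y : B) (c : ℂ) (hc : star x * z * y = c • q) (i : T) :
    star (x * t i) * z * (y * t i) = c • q' := by
  have : star (x * t i) * z * (y * t i) = star (t i) * (star x * z * y) * t i := by
    rw [star_mul]; simp only [mul_assoc]
  rw [this, hc, mul_smul_comm, smul_mul_assoc, mul_assoc, h.qt, h.tt]

lemma diff (h : Tee H H' q q' t) (x z y : B) (hx : x ∈ H) (hz : z ∈ H) (hy : y ∈ H)
    (hxq : x * q = x) (hyq : y * q = y) (i j : T) (hij : i ≠ j) :
    star (x * t i) * z * (y * t j) = 0 := by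
  obtain ⟨c, hc⟩ := h.hq.scal (star x * z * y) (mul_mem (mul_mem (star_mem hx) hz) hy)
  have hqx : q * star x = star x := by
    have := congrArg star hxq
    rwa [star_mul, h.hq.proj.ss] at this
  have hc' : star x * z * y = c • q := by
    rw [← hc, ← mul_assoc, ← mul_assoc, hqx, mul_assoc _ y q, hyq]
  have : star (x * t i) * z * (y * t j) = star (t i) * (star x * z * y) * t j := by
    rw [star_mul]; simp only [mul_assoc]
  rw [this, hc', mul_smul_comm, smul_mul_assoc, mul_assoc, h.qt, h.tto i j hij, smul_zero]

lemma same1 (h : Tee H H' q q' t) (x y : B) (c : ℂ) (hc : star x * y = c • q) (i : T) :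
    star (x * t i) * (y * t i) = c • q' := by
  have := h.same x 1 y c (by rw [mul_one, hc]) i
  rwa [mul_one] at this

lemma diff1 (h : Tee H H' q q' t) (x y : B) (hx : x ∈ H) (hy : y ∈ H)
    (hxq : x * q = x) (hyq : y * q = y) (i j : T) (hij : i ≠ j) :
    star (x * t i) * (y * t j) = 0 := by
  obtain ⟨c, hc⟩ := h.hq.scal (star x * y) (mul_mem (star_mem hx) hy)
  have hqx : q * star x = star x := by
    have := congrArg star hxq
    rwa [star_mul, h.hq.proj.ss] at this
  have hc' : star x * y = c • q := by
    rw [← hc, ← mul_assoc, hqx, mul_assoc _ y q, hyq]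
  have : star (x * t i) * (y * t j) = star (t i) * (star x * y) * t j := by
    rw [star_mul]; simp only [mul_assoc]
  rw [this, hc', mul_smul_comm, smul_mul_assoc, mul_assoc, h.qt, h.tto i j hij, smul_zero]

lemma cols (h : Tee H H' q q' t) {ι S D κ : Type} {v : ι → B} (hv : Cols H q v) (v0 : B) (v0m : v0 ∈ H)
    (v0q : star v0 * v0 = q) (blk : ι → κ) (π : S → κ) (iS : S → T) (iD : D → T)
    (hS : Function.Injective iS) (hD : Function.Injective iD) (hne : ∀ s d, iS s ≠ iD d) :
    Cols H' q' (Sum.elim (fun x : {x : ι × S // blk x.1 = π x.2} => v x.1.1 * t (iS x.1.2))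
      (fun d => v0 * t (iD d))) := by
  have hv0 : v0 * q = v0 := mul_self_of_star_mul h.hq.proj v0q
  have one : ∀ x : B, star x * x = q → ∀ i, star (x * t i) * (x * t i) = q' := by
    intro x hx i
    have := h.same1 x x 1 (by rw [hx, one_smul]) i
    rwa [one_smul] at this
  refine ⟨?_, ?_, ?_⟩
  · rintro (x | d)
    · exact mul_mem (h.le (hv.mem _)) (h.mem _)
    · exact mul_mem (h.le v0m) (h.mem _)
  · rintro (x | d)
    · exact one _ (hv.vv _) _
    · exact one _ v0q _
  · rintro (⟨⟨a, s⟩, hx⟩ | d) (⟨⟨b, s'⟩, hy⟩ | d') hab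
    · simp only [Sum.elim_inl]
      by_cases hs : s = s'
      · subst hs
        have hne' : a ≠ b := by rintro rfl; exact hab rfl
        have := h.same1 (v a) (v b) 0 (by rw [hv.vo a b hne', zero_smul]) (iS s)
        rwa [zero_smul] at this
      · exact h.diff1 _ _ (hv.mem _) (hv.mem _) (hv.vq h.hq _) (hv.vq h.hq _) _ _ (fun e => hs (hS e))
    · exact h.diff1 _ _ (hv.mem _) v0m (hv.vq h.hq _) hv0 _ _ (hne _ _)
    · exact h.diff1 _ _ v0m (hv.mem _) hv0 (hv.vq h.hq _) _ _ (hne _ _).symm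
    · exact h.diff1 _ _ v0m v0m hv0 hv0 _ _ (fun e => hab (by rw [hD e]))

end Tee

end Step
end AFP


namespace AFP

section Step2
variable {A B : Type*} [NonUnitalCStarAlgebra A] [CStarAlgebra B]

/-- a stage exists -/
def IsStage (F : NonUnitalStarSubalgebra ℂ A) (H : NonUnitalStarSubalgebra ℂ B)
    (γ : A →ₗ[ℂ] B) (δ : B →ₗ[ℂ] A) : Prop :=
  ∃ (ι κ : Type) (_ : Fintype ι) (_ : Fintype κ) (blk : ι → κ) (p : κ → A) (e : ι → A)
    (C : A →ₗ[ℂ] Matrix ι ι ℂ) (q : B) (v w : ι → B) (v0 w0 : B) (K : B →ₗ[ℂ] Matrix ι ι ℂ),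
    Stage F H γ δ blk p e C q v w v0 w0 K

/-- restriction of coefficients along a map of index sets -/
noncomputable def subCoef {ι ι' : Type} (C : A →ₗ[ℂ] Matrix ι' ι' ℂ) (j : ι → ι') :
    A →ₗ[ℂ] Matrix ι ι ℂ where
  toFun x := Matrix.of fun a b => C x (j a) (j b)
  map_add' x y := by ext a b; simp
  map_smul' c x := by ext a b; simp

set_option maxHeartbeats 1600000 in
theorem step (hs : IsSimpleCStarAlgebra B) (hinf : ¬ FiniteDimensional ℂ B)
    (SB : ℕ → NonUnitalStarSubalgebra ℂ B) (hSB : IsAFPresentation B SB)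
    {F G : NonUnitalStarSubalgebra ℂ A} [FiniteDimensional ℂ G] (hFG : F ≤ G) (n N : ℕ)
    (γ : A →ₗ[ℂ] B) (δ : B →ₗ[ℂ] A) (hst : IsStage F (SB n) γ δ) :
    ∃ (n' : ℕ) (γ' : A →ₗ[ℂ] B) (δ' : B →ₗ[ℂ] A), N ≤ n' ∧ n ≤ n' ∧ IsStage G (SB n') γ' δ' ∧
      (∀ x ∈ F, γ' x = γ x) ∧ (∀ h ∈ SB n, δ' h = δ h) := by
  classical
  obtain ⟨ι, κ, _, _, blk, p, e, C, q, v, w, v0, w0, K, st⟩ := hst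
  obtain ⟨S, D, κ', _, _, _, π, f, g, bS, bD, p', hπ, hpf, hfo, hff, hgx, sys'⟩ := A_step hFG st.sys
  obtain ⟨n', hN, hn, q', t, hq', tm, qt, tt⟩ := lemB hs hinf SB hSB n N q st.hq
    (S ⊕ (D ⊕ (D ⊕ Bool)))
  have tee : Tee (SB n) (SB n') q q' t := ⟨hSB.1 hn, st.hq, hq', tm, qt,
    fun i => by rw [tt, if_pos rfl], fun i j hij => by rw [tt, if_neg hij]⟩
  set blk' : ({x : ι × S // blk x.1 = π x.2} ⊕ D) → κ' := Sum.elim (fun x => bS x.1.2) bD with hblk'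
  set e' : ({x : ι × S // blk x.1 = π x.2} ⊕ D) → A := Sum.elim (fun x => e x.1.1 * f x.1.2) g with he'
  obtain ⟨C', coef'⟩ := sys'.exists_coef
  have hxg : ∀ d, ∀ x ∈ F, x * g d = 0 := by
    intro d x hx
    have := congrArg star (hgx d (star x) (star_mem hx))
    simpa using this
  have hfp : ∀ s, star (f s) * p (π s) = star (f s) := by
    intro s
    have := congrArg star (hpf s)
    rwa [star_mul, (st.sys.min _).proj.ss] at this
  -- coefficients of elements of `F`
  have cSS : ∀ x ∈ F, ∀ (α β : {x : ι × S // blk x.1 = π x.2}),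
      C' x (Sum.inl α) (Sum.inl β) = if α.1.2 = β.1.2 then C x α.1.1 β.1.1 else 0 := by
    rintro x hx ⟨⟨a, s⟩, hα⟩ ⟨⟨b, s'⟩, hβ⟩
    simp only at hα hβ ⊢
    apply smul_left_injective ℂ (sys'.min (bS s)).ne
    simp only
    have h1 := coef' x (hFG hx) (Sum.inl ⟨⟨a, s⟩, hα⟩) (Sum.inl ⟨⟨b, s'⟩, hβ⟩)
    simp only [he', hblk', Sum.elim_inl] at h1
    rw [← h1]
    have h2 : star (e a * f s) * x * (e b * f s') = star (f s) * (star (e a) * x * e b) * f s' := by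
      rw [star_mul]; simp only [mul_assoc]
    rw [h2, st.coef x hx, hα, mul_smul_comm, smul_mul_assoc, hfp]
    split_ifs with hss
    · rw [← hss, hff]
    · rw [hfo s s' hss]; simp
  have cD : ∀ x ∈ F, ∀ d β, C' x (Sum.inr d) β = 0 := by
    intro x hx d β
    have h1 := coef' x (hFG hx) (Sum.inr d) β
    have h2 : star (e' (Sum.inr d)) * x = 0 := hgx d x hx
    rw [h2, zero_mul] at h1
    exact (smul_eq_zero.mp h1.symm).resolve_right (sys'.min _).ne
  have cD' : ∀ x ∈ F, ∀ α d, C' x α (Sum.inr d) = 0 := by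
    intro x hx α d
    have h1 := coef' x (hFG hx) α (Sum.inr d)
    have h2 : x * e' (Sum.inr d) = 0 := hxg d x hx
    rw [mul_assoc, h2, mul_zero] at h1
    exact (smul_eq_zero.mp h1.symm).resolve_right (sys'.min _).ne
  -- the expectation
  choose σ hσ using hπ
  let j : ι → ({x : ι × S // blk x.1 = π x.2} ⊕ D) := fun a => Sum.inl ⟨(a, σ (blk a)), (hσ _).symm⟩
  have hj : Function.Injective j := by
    intro a b hab
    have := Sum.inl_injective hab
    exact congrArg (fun x => x.1.1) this
  let E : A →ₗ[ℂ] A := recMap (subCoef C' j) e e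
  have hEF : ∀ x, E x ∈ F := fun x => sum_mem fun a _ => sum_mem fun b _ =>
    SMulMemClass.smul_mem _ (mul_mem (st.sys.mem a) (star_mem (st.sys.mem b)))
  have hEn : ∀ x ∈ G, ‖E x‖ ≤ ‖x‖ := fun x hx =>
    (E_norm st.sys j hj (C' x)).trans (sys'.norm_coef coef' x hx)
  have hEx : ∀ x ∈ F, E x = x := by
    intro x hx
    conv_rhs => rw [st.sys.recon st.coef x hx]
    change (∑ a, ∑ b, C' x (j a) (j b) • (e a * star (e b))) = _
    refine Finset.sum_congr rfl fun a _ => Finset.sum_congr rfl fun b _ => ?_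
    congr 1
    rw [cSS x hx]
    split_ifs with hab
    · rfl
    · refine (st.sys.coef_off st.coef x hx a b ?_).symm
      intro h; exact hab (by simp only [h])
  -- the new columns
  let v' : ({x : ι × S // blk x.1 = π x.2} ⊕ D) → B := Sum.elim (fun x => v x.1.1 * t (Sum.inl x.1.2)) (fun d => v0 * t (Sum.inr (Sum.inl d)))
  let w' : ({x : ι × S // blk x.1 = π x.2} ⊕ D) → B := Sum.elim (fun x => w x.1.1 * t (Sum.inl x.1.2))
    (fun d => w0 * t (Sum.inr (Sum.inr (Sum.inl d))))
  have hv' : Cols (SB n') q' v' := tee.cols st.hv v0 st.v0m st.v0q blk π Sum.inl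
    (fun d => Sum.inr (Sum.inl d)) Sum.inl_injective
    (fun a b h => Sum.inl_injective (Sum.inr_injective h)) (fun s d => by simp)
  have hw' : Cols (SB n') q' w' := tee.cols st.hw w0 st.w0m st.w0q blk π Sum.inl
    (fun d => Sum.inr (Sum.inr (Sum.inl d))) Sum.inl_injective
    (fun a b h => Sum.inl_injective (Sum.inr_injective (Sum.inr_injective h))) (fun s d => by simp)
  have v0qq : v0 * q = v0 := mul_self_of_star_mul st.hq.proj st.v0q
  have w0qq : w0 * q = w0 := mul_self_of_star_mul st.hq.proj st.w0q
  have vqq := fun a => st.hv.vq st.hq a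
  have wqq := fun a => st.hw.vq st.hq a
  let i0 : S ⊕ (D ⊕ (D ⊕ Bool)) := Sum.inr (Sum.inr (Sum.inr true))
  let i1 : S ⊕ (D ⊕ (D ⊕ Bool)) := Sum.inr (Sum.inr (Sum.inr false))
  obtain ⟨K', st'⟩ := build (v0 := v0 * t i0) (w0 := w0 * t i1) sys' coef' hq' hv' hw'
    (mul_mem (hSB.1 hn st.v0m) (tm _))
    (by have := tee.same1 v0 v0 1 (by rw [st.v0q, one_smul]) i0; rwa [one_smul] at this)
    (mul_mem (hSB.1 hn st.w0m) (tm _))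
    (by have := tee.same1 w0 w0 1 (by rw [st.w0q, one_smul]) i1; rwa [one_smul] at this)
    (by
      rintro (x | d)
      · exact tee.diff1 _ _ st.v0m (st.hv.mem _) v0qq (vqq _) _ _ (by simp [i0])
      · exact tee.diff1 _ _ st.v0m st.v0m v0qq v0qq _ _ (by simp [i0]))
    (by
      rintro (x | d)
      · exact tee.diff1 _ _ (st.hw.mem _) st.w0m (wqq _) w0qq _ _ (by simp [i1])
      · exact tee.diff1 _ _ st.w0m st.w0m w0qq w0qq _ _ (by simp [i1]))
    (γ ∘ₗ E) (fun x hx => (st.γn _ (hEF x)).trans (hEn x hx))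
    (fun x _ => hSB.1 hn (st.γm _ (hEF x)))
    (fun x _ => by
      rw [star_mul, mul_assoc, LinearMap.comp_apply, st.v0γ _ (hEF x), mul_zero])
    (fun x _ => by
      rw [← mul_assoc, LinearMap.comp_apply, st.γw0 _ (hEF x), zero_mul])
  refine ⟨n', newγ C' v' w' (γ ∘ₗ E), recMap K' e' e', hN, hn,
    ⟨_, κ', inferInstance, inferInstance, blk', p', e', C', q', v', w', _, _, K', st'⟩, ?_, ?_⟩
  · intro x hx
    refine newγ_eq hq' hw' _ x (γ x) (by rw [LinearMap.comp_apply, hEx x hx]) ?_ ?_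
    · rintro (⟨⟨a, s⟩, hα⟩ | d)
      · have h1 : star (v' (Sum.inl ⟨⟨a, s⟩, hα⟩)) * γ x
            = ∑ b, C x a b • star (w b * t (Sum.inl s)) := by
          change star (v a * t (Sum.inl s)) * γ x = _
          rw [star_mul, mul_assoc, st.vγ x hx, Finset.mul_sum]
          exact Finset.sum_congr rfl fun b _ => by rw [mul_smul_comm, star_mul]
        rw [h1, Fintype.sum_sum_type]
        simp only [cSS x hx, cD' x hx, zero_smul, Finset.sum_const_zero, add_zero]
        exact (sum_col blk π s (fun b => C x a b) (fun b hb => st.sys.coef_off st.coef x hx a b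
          (fun h => hb (h.symm.trans hα))) (fun b s => star (w b * t (Sum.inl s)))).symm
      · simp only [cD x hx, zero_smul, Finset.sum_const_zero]
        change star (v0 * t _) * γ x = 0
        rw [star_mul, mul_assoc, st.v0γ x hx, mul_zero]
    · rintro (⟨⟨b, s⟩, hβ⟩ | d)
      · have h1 : γ x * (w' (Sum.inl ⟨⟨b, s⟩, hβ⟩)) = ∑ a, C x a b • (v a * t (Sum.inl s)) := by
          change γ x * (w b * t (Sum.inl s)) = _
          rw [← mul_assoc, st.γw x hx, Finset.sum_mul]
          exact Finset.sum_congr rfl fun b _ => by rw [smul_mul_assoc]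
        rw [h1, Fintype.sum_sum_type]
        simp only [cSS x hx, cD x hx, zero_smul, Finset.sum_const_zero, add_zero, eq_comm (b := s)]
        exact (sum_col blk π s (fun a => C x a b) (fun a ha => st.sys.coef_off st.coef x hx a b
          (fun h => ha (h.trans hβ))) (fun a s => v a * t (Sum.inl s))).symm
      · simp only [cD' x hx, zero_smul, Finset.sum_const_zero]
        change γ x * (w0 * t _) = 0
        rw [← mul_assoc, st.γw0 x hx, zero_mul]
  · intro h hh
    have hh' : h ∈ SB n' := hSB.1 hn hh
    have hδF : δ h ∈ F := by
      rw [st.hδ]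
      exact sum_mem fun a _ => sum_mem fun b _ =>
        SMulMemClass.smul_mem _ (mul_mem (st.sys.mem a) (star_mem (st.sys.mem b)))
    have hδG : recMap K' e' e' h ∈ G := sum_mem fun a _ => sum_mem fun b _ =>
        SMulMemClass.smul_mem _ (mul_mem (sys'.mem a) (star_mem (sys'.mem b)))
    refine sys'.ext _ _ hδG (hFG hδF) ?_
    have zero_of : ∀ α β, star (v' α) * h * w' β = 0 → K' h α β = 0 := by
      intro α β h0
      have := st'.hK h hh' α β
      rw [h0] at this
      exact (smul_eq_zero.mp this.symm).resolve_right hq'.ne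
    intro α β
    rw [recMap_apply, sand sys']
    rcases α with ⟨⟨a, s⟩, hα⟩ | d
    · rcases β with ⟨⟨b, s'⟩, hβ⟩ | d'
      · simp only at hα hβ
        have h2 : star (e a * f s) * δ h * (e b * f s') =
            star (f s) * (star (e a) * δ h * e b) * f s' := by
          rw [star_mul]; simp only [mul_assoc]
        have h3 : star (e a * f s) * δ h * (e b * f s') = K h a b • (star (f s) * f s') := by
          rw [h2, st.hδ, recMap_apply, sand st.sys, hα, hβ, mul_smul_comm, smul_mul_assoc,
            ← mul_assoc (star (f s)), hfp, mul_assoc, hpf]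
        refine Eq.trans ?_ h3.symm
        by_cases hss : s = s'
        · subst hss
          have h4 : K' h (Sum.inl ⟨⟨a, s⟩, hα⟩) (Sum.inl ⟨⟨b, s⟩, hβ⟩) = K h a b := by
            apply smul_left_injective ℂ hq'.ne
            simp only
            rw [← st'.hK h hh']
            exact tee.same _ _ _ _ (st.hK h hh a b) _
          rw [h4, hff]
          congr 1
          exact (sys'.min (bS s)).proj.mm
        · rw [hfo s s' hss, smul_zero, zero_of, zero_smul]
          exact tee.diff _ _ _ (st.hv.mem _) hh (st.hw.mem _) (vqq _) (wqq _) _ _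
            (fun h => hss (Sum.inl_injective h))
      · rw [zero_of, zero_smul]
        · change 0 = _ * δ h * g d'
          rw [mul_assoc, hxg d' _ hδF, mul_zero]
        · exact tee.diff _ _ _ (st.hv.mem _) hh st.w0m (vqq _) w0qq _ _ (by simp)
    · rw [zero_of, zero_smul]
      · change 0 = star (g d) * δ h * _
        rw [hgx d _ hδF, zero_mul]
      · rcases β with β | d'
        · exact tee.diff _ _ _ st.v0m hh (st.hw.mem _) v0qq (wqq _) _ _ (by simp)
        · exact tee.diff _ _ _ st.v0m hh st.w0m v0qq w0qq _ _ (by simp)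

end Step2
end AFP


namespace AFP

section Limit

theorem limit_map {X Y : Type*} [NormedAddCommGroup X] [NormedSpace ℂ X] [NormedAddCommGroup Y]
    [NormedSpace ℂ Y] [CompleteSpace Y] (S : ℕ → Submodule ℂ X) (hS : Monotone S)
    (hd : ∀ x : X, x ∈ closure {y | ∃ k, y ∈ S k}) (f : ℕ → X →ₗ[ℂ] Y)
    (hf : ∀ k, ∀ x ∈ S k, ‖f k x‖ ≤ ‖x‖) (hc : ∀ k, ∀ x ∈ S k, f (k + 1) x = f k x) :
    ∃ g : X →L[ℂ] Y, (∀ x, ‖g x‖ ≤ ‖x‖) ∧ ∀ k, ∀ x ∈ S k, g x = f k x := by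
  have hcc : ∀ k l, k ≤ l → ∀ x ∈ S k, f l x = f k x := by
    intro k l hkl
    induction l, hkl using Nat.le_induction with
    | base => intro x _; rfl
    | succ l hl ih => intro x hx; rw [hc l x (hS hl hx), ih x hx]
  let W : Submodule ℂ X :=
    { carrier := {y | ∃ k, y ∈ S k}
      add_mem' := by
        rintro a b ⟨k, hk⟩ ⟨l, hl⟩
        exact ⟨max k l, add_mem (hS (le_max_left _ _) hk) (hS (le_max_right _ _) hl)⟩
      zero_mem' := ⟨0, zero_mem _⟩
      smul_mem' := by
        rintro c a ⟨k, hk⟩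
        exact ⟨k, (S k).smul_mem c hk⟩ }
  have hW : ∀ x : W, ∃ k, (x : X) ∈ S k := fun x => x.2
  choose κ hκ using hW
  have hval : ∀ (x : W) (l : ℕ), (x : X) ∈ S l → f (κ x) x = f l x := by
    intro x l hl
    rw [← hcc _ _ (le_max_left (κ x) l) _ (hκ x), hcc _ _ (le_max_right (κ x) l) _ hl]
  let g0 : W →ₗ[ℂ] Y :=
    { toFun := fun x => f (κ x) x
      map_add' := by
        intro x y
        have hx := hS (le_max_left (κ x) (κ y)) (hκ x)
        have hy := hS (le_max_right (κ x) (κ y)) (hκ y)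
        rw [hval (x + y) (max (κ x) (κ y)) (add_mem hx hy), hval x _ hx, hval y _ hy,
          Submodule.coe_add, map_add]
      map_smul' := by
        intro c x
        rw [hval (c • x) (κ x) ((S _).smul_mem c (hκ x)), Submodule.coe_smul, map_smul]
        rfl }
  have hdr : DenseRange W.subtype := by
    intro x
    have h1 : Set.range W.subtype = {y | ∃ k, y ∈ S k} := by
      ext y
      constructor
      · rintro ⟨z, rfl⟩; exact z.2
      · intro hy; exact ⟨⟨y, hy⟩, rfl⟩
    rw [h1]; exact hd x
  have hn : ∀ x : W, ‖g0 x‖ ≤ 1 * ‖W.subtype x‖ := by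
    intro x; rw [one_mul]; exact hf _ _ (hκ x)
  refine ⟨g0.extendOfNorm W.subtype, fun x => ?_, fun k x hx => ?_⟩
  · simpa using LinearMap.norm_extendOfNorm_apply_le hdr 1 hn x
  · have := LinearMap.extendOfNorm_eq hdr ⟨1, hn⟩ ⟨x, k, hx⟩
    exact this.trans (hval ⟨x, k, hx⟩ k hx)

variable {A B : Type*} [NonUnitalCStarAlgebra A] [CStarAlgebra B]

theorem base_stage (hinf : ¬ FiniteDimensional ℂ B)
    (SB : ℕ → NonUnitalStarSubalgebra ℂ B) (hSB : IsAFPresentation B SB) :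
    ∃ n, IsStage (⊥ : NonUnitalStarSubalgebra ℂ A) (SB n) 0 0 := by
  obtain ⟨n, y, hy, hy0⟩ : ∃ n, ∃ y ∈ SB n, y ≠ 0 := by
    by_contra hcon
    push Not at hcon
    apply hinf
    have h0 : ∀ x : B, x = 0 := by
      intro x
      have hx := hSB.2.2 x
      have hsub : (⋃ k, (SB k : Set B)) ⊆ {0} := by
        rintro z hz
        obtain ⟨k, hk⟩ := Set.mem_iUnion.mp hz
        exact hcon k z hk
      have := closure_mono hsub hx
      simpa using this
    have : Subsingleton B := ⟨fun a b => by rw [h0 a, h0 b]⟩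
    infer_instance
  have := hSB.2.1 n
  obtain ⟨u, huS, hu, huu⟩ := exists_unit (SB n)
  obtain ⟨R, _, r, hr1, hr2, hr3, hr4⟩ := exists_decomp (SB n) _ u rfl huS hu
  obtain ⟨s⟩ : Nonempty R := by
    by_contra hR
    rw [not_nonempty_iff] at hR
    apply hy0
    rw [← huu y hy, ← hr3, Finset.univ_eq_empty, Finset.sum_empty, zero_mul]
  have hm := hr1 s
  have hss : star (r s) * r s = r s := by rw [hm.proj.ss, hm.proj.mm]
  refine ⟨n, Empty, Empty, inferInstance, inferInstance, id, Empty.elim, Empty.elim, 0, r s,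
    Empty.elim, Empty.elim, r s, r s, 0, ?_⟩
  have hb : ∀ x ∈ (⊥ : NonUnitalStarSubalgebra ℂ A), x = 0 := fun x hx =>
    NonUnitalStarAlgebra.mem_bot.mp hx
  exact
    { sys := ⟨fun k => k.elim, fun k => k.elim, fun k => k.elim, fun k => k.elim, fun k => k.elim,
        fun x hx => by rw [hb x hx, mul_zero]⟩
      coef := fun x _ k => k.elim
      hq := hm
      hv := ⟨fun k => k.elim, fun k => k.elim, fun k => k.elim⟩
      hw := ⟨fun k => k.elim, fun k => k.elim, fun k => k.elim⟩
      v0m := hm.mem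
      v0q := hss
      w0m := hm.mem
      w0q := hss
      γm := fun x _ => zero_mem _
      γn := fun x _ => by simp
      γw := fun x _ k => k.elim
      vγ := fun x _ k => k.elim
      v0γ := fun x _ => by simp
      γw0 := fun x _ => by simp
      hK := fun x _ k => k.elim
      hδ := by ext x; simp [recMap_apply] }

/-- the chain `0, SA 0, SA 1, …` -/
noncomputable def chain (SA : ℕ → NonUnitalStarSubalgebra ℂ A) : ℕ → NonUnitalStarSubalgebra ℂ A
  | 0 => ⊥
  | k + 1 => SA k

lemma chain_mono {SA : ℕ → NonUnitalStarSubalgebra ℂ A} (h : Monotone SA) : Monotone (chain SA) := by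
  refine monotone_nat_of_le_succ fun k => ?_
  cases k with
  | zero => exact bot_le
  | succ k => exact h (Nat.le_succ k)

theorem main (SA : ℕ → NonUnitalStarSubalgebra ℂ A) (hSA : IsAFPresentation A SA)
    (SB : ℕ → NonUnitalStarSubalgebra ℂ B) (hSB : IsAFPresentation B SB)
    (hs : IsSimpleCStarAlgebra B) (hinf : ¬ FiniteDimensional ℂ B) :
    ∃ (γ : A →ₗᵢ[ℂ] B) (δ : B →ₗ[ℂ] A), (∀ b : B, ‖δ b‖ ≤ ‖b‖) ∧ (∀ a : A, δ (γ a) = a) := by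
  obtain ⟨n0, h0⟩ := base_stage (A := A) hinf SB hSB
  let T (k : ℕ) := {s : ℕ × (A →ₗ[ℂ] B) × (B →ₗ[ℂ] A) //
    k ≤ s.1 ∧ IsStage (chain SA k) (SB s.1) s.2.1 s.2.2}
  have hstep : ∀ k (s : T k), ∃ s' : T (k + 1), s.1.1 ≤ s'.1.1 ∧
      (∀ x ∈ chain SA k, s'.1.2.1 x = s.1.2.1 x) ∧ (∀ h ∈ SB s.1.1, s'.1.2.2 h = s.1.2.2 h) := by
    rintro k ⟨⟨n, γ, δ⟩, hk, hst⟩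
    have : FiniteDimensional ℂ (chain SA (k + 1)) := hSA.2.1 k
    obtain ⟨n', γ', δ', hN, hn, hst', h1, h2⟩ :=
      step hs hinf SB hSB (chain_mono hSA.1 (Nat.le_succ k)) n (k + 1) γ δ hst
    exact ⟨⟨⟨n', γ', δ'⟩, hN, hst'⟩, hn, h1, h2⟩
  choose nx hnx using hstep
  let s : ∀ k, T k := fun k => Nat.rec ⟨⟨n0, 0, 0⟩, Nat.zero_le _, h0⟩ (fun k s => nx k s) k
  have hs1 : ∀ k, s (k + 1) = nx k (s k) := fun k => rfl
  have hmono : Monotone fun k => (s k).1.1 := monotone_nat_of_le_succ fun k => by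
    rw [hs1]; exact (hnx k (s k)).1
  obtain ⟨γ, hγn, hγ⟩ := limit_map (fun k => (chain SA k).toSubmodule)
    (fun a b hab => chain_mono hSA.1 hab) (by
      intro x
      refine closure_mono ?_ (hSA.2.2 x)
      intro z hz
      obtain ⟨k, hk⟩ := Set.mem_iUnion.mp hz
      exact ⟨k + 1, hk⟩) (fun k => (s k).1.2.1)
    (fun k x hx => by
      obtain ⟨ι, κ, _, _, blk, p, e, C, q, v, w, v0, w0, K, st⟩ := (s k).2.2
      exact st.γn x hx)
    (fun k x hx => by rw [hs1]; exact (hnx k (s k)).2.1 x hx)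
  obtain ⟨δ, hδn, hδ⟩ := limit_map (fun k => (SB (s k).1.1).toSubmodule)
    (fun a b hab => hSB.1 (hmono hab)) (by
      intro x
      refine closure_mono ?_ (hSB.2.2 x)
      intro z hz
      obtain ⟨k, hk⟩ := Set.mem_iUnion.mp hz
      exact ⟨k, hSB.1 (s k).2.1 hk⟩) (fun k => (s k).1.2.2)
    (fun k x hx => by
      obtain ⟨ι, κ, _, _, blk, p, e, C, q, v, w, v0, w0, K, st⟩ := (s k).2.2
      exact st.δn x hx)
    (fun k x hx => by rw [hs1]; exact (hnx k (s k)).2.2 x hx)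
  have hid : ∀ a : A, δ (γ a) = a := by
    have hcl : IsClosed {a : A | δ (γ a) = a} :=
      isClosed_eq (δ.continuous.comp γ.continuous) continuous_id
    intro a
    refine closure_minimal ?_ hcl (hSA.2.2 a)
    intro z hz
    obtain ⟨k, hk⟩ := Set.mem_iUnion.mp hz
    have hk' : z ∈ chain SA (k + 1) := hk
    obtain ⟨ι, κ, _, _, blk, p, e, C, q, v, w, v0, w0, K, st⟩ := (s (k + 1)).2.2
    change δ (γ z) = z
    rw [hγ (k + 1) z hk', hδ (k + 1) _ (st.γm z hk')]
    exact st.δγ z hk'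
  refine ⟨⟨γ.toLinearMap, fun a => le_antisymm (hγn a) ?_⟩, δ.toLinearMap, hδn, hid⟩
  calc ‖a‖ = ‖δ (γ a)‖ := by rw [hid]
    _ ≤ ‖γ a‖ := hδn _

end Limit
end AFP

theorem exists_complemented_contractive_injection_into_simple
    (A B : Type*) [NonUnitalCStarAlgebra A] [CStarAlgebra B]
    (hA : ∃ SA : ℕ → NonUnitalStarSubalgebra ℂ A, IsAFPresentation A SA)
    (hB : ∃ SB : ℕ → NonUnitalStarSubalgebra ℂ B, IsAFPresentation B SB)
    (hBsimple : IsSimpleCStarAlgebra B)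
    (hBinf : ¬ FiniteDimensional ℂ B) :
    ∃ (γ : A →ₗᵢ[ℂ] B) (δ : B →ₗ[ℂ] A),
      (∀ b : B, ‖δ b‖ ≤ ‖b‖) ∧
      (∀ a : A, δ (γ a) = a) := by
  obtain ⟨SA, hSA⟩ := hA
  obtain ⟨SB, hSB⟩ := hB
  exact AFP.main SA hSA SB hSB hBsimple hBinf
end

section
/- Let F be a unital C*-algebra admitting an increasing sequence (S_k) of unital *-subalgebras with each S_k *-isomorphic to the full matrix algebra M_{2^k}(ℂ) and with union dense in F. Then F is isomorphic as a Banach space to C₀(ℕ, F). -/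
open Filter Topology

section c0
set_option linter.unusedSectionVars false
variable {F : Type*} [NormedAddCommGroup F] [NormedSpace ℂ F]

lemma c0_norm_apply_le (f : ZeroAtInftyContinuousMap ℕ F) (n : ℕ) : ‖f n‖ ≤ ‖f‖ :=
  f.toBCF.norm_coe_le_norm n

lemma c0_norm_le (f : ZeroAtInftyContinuousMap ℕ F) {C : ℝ} (hC : 0 ≤ C) (h : ∀ n, ‖f n‖ ≤ C) :
    ‖f‖ ≤ C :=
  (BoundedContinuousFunction.norm_le (f := f.toBCF) hC).2 h

lemma c0_tendsto (f : ZeroAtInftyContinuousMap ℕ F) : Tendsto (fun n => f n) atTop (𝓝 0) := by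
  have := f.zero_at_infty'
  rwa [cocompact_eq_cofinite, Nat.cofinite_eq_atTop] at this

/-- build an element of c0 from a sequence -/
noncomputable def c0mk (x : ℕ → F) (hx : Tendsto x atTop (𝓝 0)) : ZeroAtInftyContinuousMap ℕ F where
  toFun := x
  continuous_toFun := continuous_of_discreteTopology
  zero_at_infty' := by rwa [cocompact_eq_cofinite, Nat.cofinite_eq_atTop]

@[simp] lemma c0mk_apply (x : ℕ → F) (hx) (n : ℕ) : c0mk x hx n = x n := rfl

/-- F × c0 ≃ c0 -/
lemma c0_cons : Nonempty ((ZeroAtInftyContinuousMap ℕ F × F) ≃L[ℂ] ZeroAtInftyContinuousMap ℕ F) := by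
  let T : (ZeroAtInftyContinuousMap ℕ F × F) →ₗ[ℂ] ZeroAtInftyContinuousMap ℕ F :=
    { toFun := fun p => c0mk (fun n => Nat.casesOn n p.2 (fun m => p.1 m)) (by
        rw [← tendsto_add_atTop_iff_nat 1]
        exact c0_tendsto p.1)
      map_add' := by
        intro p q; ext n; cases n <;> simp
      map_smul' := by
        intro c p; ext n; cases n <;> simp }
  let U : ZeroAtInftyContinuousMap ℕ F →ₗ[ℂ] (ZeroAtInftyContinuousMap ℕ F × F) :=
    { toFun := fun f => (c0mk (fun n => f (n+1)) ((tendsto_add_atTop_iff_nat 1).2 (c0_tendsto f)), f 0)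
      map_add' := by
        intro p q; ext n <;> simp
      map_smul' := by
        intro c p; ext n <;> simp }
  refine ⟨ContinuousLinearEquiv.equivOfInverse (T.mkContinuous 1 ?_) (U.mkContinuous 1 ?_) ?_ ?_⟩
  · intro p
    rw [one_mul]
    refine c0_norm_le _ (norm_nonneg _) fun n => ?_
    cases n with
    | zero => exact norm_snd_le p
    | succ m => exact (c0_norm_apply_le p.1 m).trans (norm_fst_le p)
  · intro f
    rw [one_mul]
    refine max_le (c0_norm_le _ (norm_nonneg _) fun n => c0_norm_apply_le f (n+1)) (c0_norm_apply_le f 0)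
  · intro p
    refine Prod.ext ?_ ?_
    · ext n; rfl
    · rfl
  · intro f
    ext n; cases n <;> rfl

/-- c0 × c0 ≃ c0 -/
lemma c0_prod : Nonempty ((ZeroAtInftyContinuousMap ℕ F × ZeroAtInftyContinuousMap ℕ F) ≃L[ℂ]
    ZeroAtInftyContinuousMap ℕ F) := by
  have hdiv : Tendsto (fun n : ℕ => n / 2) atTop atTop := Nat.tendsto_div_const_atTop (by norm_num)
  have h2 : Tendsto (fun n : ℕ => 2 * n) atTop atTop :=
    tendsto_atTop_mono (fun n => by simp only [id]; omega) tendsto_id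
  have h3 : Tendsto (fun n : ℕ => 2 * n + 1) atTop atTop :=
    tendsto_atTop_mono (fun n => by simp only [id]; omega) tendsto_id
  let T : (ZeroAtInftyContinuousMap ℕ F × ZeroAtInftyContinuousMap ℕ F) →ₗ[ℂ]
      ZeroAtInftyContinuousMap ℕ F :=
    { toFun := fun p => c0mk (fun n => if n % 2 = 0 then p.1 (n / 2) else p.2 (n / 2)) (by
        refine Tendsto.if' ?_ ?_
        · exact (c0_tendsto p.1).comp hdiv
        · exact (c0_tendsto p.2).comp hdiv)
      map_add' := by
        intro p q; ext n; simp only [c0mk_apply, ZeroAtInftyContinuousMap.add_apply]; split_ifs <;> simp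
      map_smul' := by
        intro c p; ext n
        simp only [c0mk_apply, ZeroAtInftyContinuousMap.smul_apply]; split_ifs <;> simp }
  let U : ZeroAtInftyContinuousMap ℕ F →ₗ[ℂ]
      (ZeroAtInftyContinuousMap ℕ F × ZeroAtInftyContinuousMap ℕ F) :=
    { toFun := fun f => (c0mk (fun n => f (2 * n)) ((c0_tendsto f).comp h2),
        c0mk (fun n => f (2 * n + 1)) ((c0_tendsto f).comp h3))
      map_add' := by
        intro p q; ext n <;> simp
      map_smul' := by
        intro c p; ext n <;> simp }
  refine ⟨ContinuousLinearEquiv.equivOfInverse (T.mkContinuous 1 ?_) (U.mkContinuous 1 ?_) ?_ ?_⟩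
  · intro p
    rw [one_mul]
    refine c0_norm_le _ (norm_nonneg _) fun n => ?_
    change ‖if n % 2 = 0 then p.1 (n / 2) else p.2 (n / 2)‖ ≤ _
    split_ifs
    · exact (c0_norm_apply_le p.1 _).trans (norm_fst_le p)
    · exact (c0_norm_apply_le p.2 _).trans (norm_snd_le p)
  · intro f
    rw [one_mul]
    exact max_le (c0_norm_le _ (norm_nonneg _) fun n => c0_norm_apply_le f _)
      (c0_norm_le _ (norm_nonneg _) fun n => c0_norm_apply_le f _)
  · intro p
    refine Prod.ext ?_ ?_
    · ext n
      change (if (2 * n) % 2 = 0 then p.1 (2 * n / 2) else p.2 (2 * n / 2)) = p.1 n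
      rw [if_pos (by omega)]; congr 1; omega
    · ext n
      change (if (2 * n + 1) % 2 = 0 then p.1 ((2 * n + 1) / 2) else p.2 ((2 * n + 1) / 2)) = p.2 n
      rw [if_neg (by omega)]; congr 1; omega
  · intro f
    ext n
    change (if n % 2 = 0 then f (2 * (n / 2)) else f (2 * (n / 2) + 1)) = f n
    split_ifs <;> congr 1 <;> omega

lemma pelczynski (P : F →L[ℂ] ZeroAtInftyContinuousMap ℕ F)
    (J : ZeroAtInftyContinuousMap ℕ F →L[ℂ] F) (h : ∀ x, P (J x) = x) :
    Nonempty (F ≃L[ℂ] ZeroAtInftyContinuousMap ℕ F) := by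
  obtain ⟨c1⟩ := c0_cons (F := F)
  obtain ⟨c2⟩ := c0_prod (F := F)
  let e := ContinuousLinearEquiv.equivOfRightInverse P J h
  exact ⟨e.trans <| (c2.symm.prodCongr (.refl ℂ _)).trans <|
    (ContinuousLinearEquiv.prodAssoc ℂ _ _ _).trans <|
    ((ContinuousLinearEquiv.refl ℂ _).prodCongr e.symm).trans c1⟩

lemma stage_two [CompleteSpace F] (A B E G : F →L[ℂ] F)
    (hEA : ∀ x, E (A x) = x) (hEB : ∀ x, E (B x) = 0)
    (hGA : ∀ x, G (A x) = 0) (hGB : ∀ x, G (B x) = x)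
    (hE : ∀ x, ‖E x‖ ≤ ‖x‖) (hG : ∀ x, ‖G x‖ ≤ ‖x‖)
    (hAB : ∀ (M : ℝ) a b, ‖a‖ ≤ M → ‖b‖ ≤ M → ‖A a + B b‖ ≤ M)
    (D : Set F) (hD : Dense D) (hGD : ∀ y ∈ D, ∀ᶠ n in atTop, G (E^[n] y) = 0) :
    Nonempty (F ≃L[ℂ] ZeroAtInftyContinuousMap ℕ F) := by
  -- norm bounds
  have hEn : ∀ n x, ‖E^[n] x‖ ≤ ‖x‖ := by
    intro n
    induction n with
    | zero => simp
    | succ n ih => intro x; rw [Function.iterate_succ_apply]; exact (ih _).trans (hE x)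
  have hGE : ∀ n x, ‖G (E^[n] x)‖ ≤ ‖x‖ := fun n x => (hG _).trans (hEn n x)
  have hpow : ∀ (T : F →L[ℂ] F) n x, (T ^ n) x = T^[n] x := by
    intro T n
    induction n with
    | zero => intro x; rfl
    | succ n ih =>
      intro x
      rw [pow_succ', Function.iterate_succ_apply', mul_apply_eq_comp, ih]
  have hsum : ∀ (N : ℕ) (x : ℕ → F) (M : ℝ), 0 ≤ M → (∀ n, ‖x n‖ ≤ M) →
      ‖∑ n ∈ Finset.range N, (A ^ n) (B (x n))‖ ≤ M := by
    intro N
    induction N with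
    | zero => intro x M hM _; simpa using hM
    | succ N ih =>
      intro x M hM hx
      rw [Finset.sum_range_succ']
      have := hAB M _ (x 0) (ih (fun n => x (n+1)) M hM (fun n => hx _)) (hx 0)
      simpa [map_sum, pow_succ'] using this
  have hfin : ∀ (t : Finset ℕ) (x : ℕ → F) (M : ℝ), 0 ≤ M → (∀ n ∈ t, ‖x n‖ ≤ M) →
      ‖∑ n ∈ t, (A ^ n) (B (x n))‖ ≤ M := by
    intro t x M hM hx
    classical
    obtain ⟨N, hN⟩ := t.exists_nat_subset_range
    have := hsum N (fun n => if n ∈ t then x n else 0) M hM (by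
      intro n; split_ifs with h
      · exact hx n h
      · simpa using hM)
    convert this using 2
    rw [← Finset.sum_subset hN]
    · exact Finset.sum_congr rfl fun n hn => by rw [if_pos hn]
    · intro n _ hn; rw [if_neg hn]; simp
  have hsummable : ∀ x : ZeroAtInftyContinuousMap ℕ F, Summable fun n => (A ^ n) (B (x n)) := by
    intro x
    rw [summable_iff_vanishing_norm]
    intro ε hε
    have h1 : ∀ᶠ n in atTop, ‖x n‖ < ε / 2 :=
      (tendsto_zero_iff_norm_tendsto_zero.1 (c0_tendsto x)).eventually_lt_const (by linarith)
    obtain ⟨N, hN⟩ := eventually_atTop.1 h1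
    refine ⟨Finset.range N, fun t ht => lt_of_le_of_lt (hfin t x (ε/2) (by linarith) ?_) (by linarith)⟩
    intro n hn
    refine (hN n ?_).le
    by_contra hcon
    exact Finset.disjoint_left.1 ht hn (Finset.mem_range.2 (by omega))
  let J : ZeroAtInftyContinuousMap ℕ F →ₗ[ℂ] F :=
    { toFun := fun x => ∑' n, (A ^ n) (B (x n))
      map_add' := by
        intro x y
        rw [← (hsummable x).tsum_add (hsummable y)]
        simp
      map_smul' := by
        intro c x
        simp only [ZeroAtInftyContinuousMap.smul_apply, map_smul, RingHom.id_apply]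
        exact (hsummable x).tsum_const_smul c }
  have hlim : ∀ y, Tendsto (fun n => G (E^[n] y)) atTop (𝓝 0) := by
    intro y
    rw [Metric.tendsto_atTop]
    intro ε hε
    obtain ⟨z, hz, hyz⟩ := hD.exists_dist_lt y hε
    obtain ⟨N, hN⟩ := eventually_atTop.1 (hGD z hz)
    refine ⟨N, fun n hn => ?_⟩
    have : G (E^[n] y) = G (E^[n] (y - z)) := by
      rw [← hpow, ← hpow, map_sub, map_sub, hpow, hpow, hN n hn, sub_zero]
    rw [dist_zero_right, this]
    refine (hGE _ _).trans_lt ?_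
    rwa [← dist_eq_norm]
  let P : F →ₗ[ℂ] ZeroAtInftyContinuousMap ℕ F :=
    { toFun := fun y => c0mk (fun n => G (E^[n] y)) (hlim y)
      map_add' := by
        intro x y; ext n; simp only [c0mk_apply, ZeroAtInftyContinuousMap.add_apply, ← hpow, map_add]
      map_smul' := by
        intro c x; ext n
        simp only [c0mk_apply, ZeroAtInftyContinuousMap.smul_apply, ← hpow, map_smul, RingHom.id_apply] }
  have hAn : ∀ n x, E^[n] (A^[n] x) = x := by
    intro n
    induction n with
    | zero => simp
    | succ n ih => 
      intro x
      rw [Function.iterate_succ_apply, Function.iterate_succ_apply', hEA, ih]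
  have hdiag : ∀ n x, G (E^[n] ((A ^ n) (B x))) = x := by
    intro n x; rw [hpow, hAn, hGB]
  have hE0 : ∀ n, E^[n] 0 = 0 := by intro n; rw [← hpow, map_zero]
  have hoff : ∀ n m x, m ≠ n → G (E^[n] ((A ^ m) (B x))) = 0 := by
    intro n m x hmn
    rw [hpow]
    rcases lt_or_gt_of_ne hmn with h | h
    · obtain ⟨d, rfl⟩ := Nat.exists_eq_add_of_lt h
      have : m + d + 1 = (d + 1) + m := by omega
      rw [this, Function.iterate_add_apply, hAn, Function.iterate_succ_apply, hEB, hE0, map_zero]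
    · obtain ⟨d, rfl⟩ := Nat.exists_eq_add_of_lt h
      have : n + d + 1 = n + (d + 1) := by omega
      rw [this, Function.iterate_add_apply, hAn, Function.iterate_succ_apply', hGA]
  refine pelczynski (P.mkContinuous 1 ?_) (J.mkContinuous 1 ?_) ?_
  · intro y
    rw [one_mul]
    exact c0_norm_le _ (norm_nonneg _) fun n => hGE n y
  · intro x
    rw [one_mul]
    refine le_of_tendsto ((hsummable x).hasSum.norm) (Eventually.of_forall fun t => ?_)
    exact hfin t x _ (norm_nonneg _) fun n _ => c0_norm_apply_le x n
  · intro x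
    ext n
    change G (E^[n] (∑' m, (A ^ m) (B (x m)))) = x n
    rw [← hpow, ← ContinuousLinearMap.comp_apply, ContinuousLinearMap.map_tsum _ (hsummable x)]
    simp only [ContinuousLinearMap.comp_apply, hpow E]
    rw [tsum_eq_single n, hdiag]
    intro m hm; exact hoff n m _ hm

end c0

open Matrix
lemma rank_two {m : Type*} [Fintype m] [DecidableEq m] (P : Matrix m m ℂ) (hP : P * P = P)
    (hs : star P = P) (ht : P.trace = 2) :
    ∃ X : Matrix m (Fin 2) ℂ, Xᴴ * X = 1 ∧ X * Xᴴ = P := by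
  have hH : P.IsHermitian := hs
  set U : Matrix m m ℂ := (hH.eigenvectorUnitary : Matrix m m ℂ) with hU
  have hUU : Uᴴ * U = 1 := Unitary.coe_star_mul_self hH.eigenvectorUnitary
  have hUU' : U * Uᴴ = 1 := Unitary.coe_mul_star_self hH.eigenvectorUnitary
  set l : m → ℂ := fun i => (hH.eigenvalues i : ℂ) with hl
  have hsp : P = U * diagonal l * Uᴴ := by
    have := hH.spectral_theorem
    rw [Unitary.conjStarAlgAut_apply] at this
    exact this
  have hd : diagonal l = Uᴴ * P * U := by
    rw [hsp]
    simp only [Matrix.mul_assoc, hUU, Matrix.mul_one]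
    simp only [← Matrix.mul_assoc, hUU, Matrix.one_mul]
  have hll : ∀ i, l i * l i = l i := by
    have : diagonal l * diagonal l = diagonal l := by
      rw [hd]
      calc Uᴴ * P * U * (Uᴴ * P * U) = Uᴴ * P * (U * Uᴴ) * P * U := by simp only [Matrix.mul_assoc]
        _ = Uᴴ * (P * P) * U := by rw [hUU']; simp only [Matrix.mul_assoc, Matrix.one_mul]
        _ = _ := by rw [hP]
    rw [diagonal_mul_diagonal] at this
    intro i
    exact congrFun (diagonal_injective this) i
  have h01 : ∀ i, l i = 0 ∨ l i = 1 := by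
    intro i
    have := hll i
    rcases eq_or_ne (l i) 0 with h | h
    · exact Or.inl h
    · exact Or.inr (mul_left_cancel₀ h (by rw [this, mul_one]))
  classical
  set s : Finset m := Finset.univ.filter fun i => l i = 1 with hs'
  have hlif : ∀ i, l i = if i ∈ s then 1 else 0 := by
    intro i
    rcases h01 i with h | h <;> simp [hs', h]
  have hcard : s.card = 2 := by
    have h1 : ∑ i, l i = 2 := by
      rw [← ht, ← trace_diagonal, hd, Matrix.trace_mul_comm, ← Matrix.mul_assoc, hUU', Matrix.one_mul]
    simp only [hlif] at h1
    rw [Finset.sum_ite_mem, Finset.univ_inter] at h1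
    simp at h1
    exact_mod_cast h1
  let σ : Fin 2 ≃ s := (s.equivFinOfCardEq hcard).symm
  refine ⟨U.submatrix id (fun a => (σ a : m)), ?_, ?_⟩
  · ext a b
    have := congrFun (congrFun hUU (σ a)) (σ b)
    rw [Matrix.mul_apply] at this ⊢
    simp only [conjTranspose_apply, submatrix_apply, id] at this ⊢
    rw [this, Matrix.one_apply, Matrix.one_apply]
    simp [Subtype.ext_iff.symm, σ.injective.eq_iff]
  · ext i j
    rw [hsp, Matrix.mul_apply, Matrix.mul_apply]
    simp only [Matrix.mul_diagonal, conjTranspose_apply, submatrix_apply, id, hlif]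
    simp only [mul_ite, ite_mul, mul_one, mul_zero, zero_mul]
    rw [Finset.sum_ite_mem, Finset.univ_inter, ← Finset.sum_coe_sort s]
    exact Equiv.sum_comp σ (fun k : s => U i k * star (U j k))

/-- 2×2 matrix units inside a rank two corner. -/
lemma corner_units {m : Type*} [Fintype m] [DecidableEq m] (P : Matrix m m ℂ) (hP : P * P = P)
    (hs : star P = P) (ht : P.trace = 2) :
    ∃ v : Fin 2 → Fin 2 → Matrix m m ℂ, (∀ a b, star (v a b) = v b a) ∧
      (∀ a b c d, v a b * v c d = if b = c then v a d else 0) ∧ (v 0 0 + v 1 1 = P) ∧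
      (∀ y, ∃ c : Fin 2 → Fin 2 → ℂ, P * y * P = ∑ a, ∑ b, c a b • v a b) := by
  obtain ⟨X, hX1, hX2⟩ := rank_two P hP hs ht
  refine ⟨fun a b => X * single a b (1:ℂ) * Xᴴ, ?_, ?_, ?_, ?_⟩
  · intro a b
    simp [star_eq_conjTranspose, conjTranspose_mul, Matrix.mul_assoc]
  · intro a b c d
    dsimp only
    have : X * single a b (1:ℂ) * Xᴴ * (X * single c d (1:ℂ) * Xᴴ) =
      X * (single a b (1:ℂ) * (Xᴴ * X) * single c d (1:ℂ)) * Xᴴ := by simp only [Matrix.mul_assoc]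
    rw [this, hX1, Matrix.mul_one]
    split_ifs with h
    · subst h; simp
    · rw [single_mul_single_of_ne (h := h)]; simp
  · rw [← hX2, ← Matrix.add_mul, ← Matrix.mul_add]
    congr 1
    have : single (0 : Fin 2) (0 : Fin 2) (1:ℂ) + single 1 1 1 = 1 := by
      ext i j; fin_cases i <;> fin_cases j <;> simp [single]
    rw [this, Matrix.mul_one]
  · intro y
    refine ⟨fun a b => (Xᴴ * y * X) a b, ?_⟩
    have : P * y * P = X * (Xᴴ * y * X) * Xᴴ := by rw [← hX2]; simp only [Matrix.mul_assoc]
    rw [this]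
    conv_lhs => rw [matrix_eq_sum_single (Xᴴ * y * X)]
    simp only [Matrix.mul_sum, Matrix.sum_mul]
    refine Finset.sum_congr rfl fun a _ => Finset.sum_congr rfl fun b _ => ?_
    have : single a b ((Xᴴ * y * X) a b) = ((Xᴴ * y * X) a b) • single a b (1:ℂ) := by
      rw [smul_single, smul_eq_mul, mul_one]
    rw [this, Matrix.mul_smul, Matrix.smul_mul]

lemma matrix_rel_units {m : Type*} [Fintype m] [DecidableEq m] {n : ℕ} (i0 : Fin n)
    (hcard : Fintype.card m = 2 * n) (f : Fin n → Fin n → Matrix m m ℂ)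
    (hfs : ∀ i j, star (f i j) = f j i)
    (hfm : ∀ i j k l, f i j * f k l = if j = k then f i l else 0)
    (hf1 : ∑ i, f i i = 1) :
    ∃ w : Fin 2 → Fin 2 → Matrix m m ℂ, (∀ a b, star (w a b) = w b a) ∧
      (∀ a b c d, w a b * w c d = if b = c then w a d else 0) ∧ (w 0 0 + w 1 1 = 1) ∧
      (∀ a b i j, w a b * f i j = f i j * w a b) ∧
      (∀ y, ∃ c : Fin 2 → Fin 2 → Fin n → Fin n → ℂ,
        y = ∑ a, ∑ b, (∑ i, ∑ j, c a b i j • f i j) * w a b) := by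
  have hn : (n : ℂ) ≠ 0 := by
    have : 0 < n := i0.pos
    exact_mod_cast this.ne'
  have hmm : ∀ i j k, f i j * f j k = f i k := fun i j k => by rw [hfm, if_pos rfl]
  have htr : (f i0 i0).trace = 2 := by
    have h1 : ∀ i, (f i i).trace = (f i0 i0).trace := by
      intro i
      rw [← hmm i i0 i, Matrix.trace_mul_comm, hmm]
    have h2 := congrArg Matrix.trace hf1
    rw [Matrix.trace_sum, Matrix.trace_one, hcard] at h2
    simp only [h1] at h2
    simp only [Finset.sum_const, Finset.card_univ, Fintype.card_fin, nsmul_eq_mul] at h2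
    push_cast at h2
    apply mul_left_cancel₀ hn
    rw [h2]; ring
  obtain ⟨v, hvs, hvm, hv1, hvy⟩ := corner_units (f i0 i0) (hmm _ _ _) (hfs _ _) htr
  have hPv : ∀ a b, f i0 i0 * v a b = v a b := by
    intro a b
    rw [← hv1, add_mul, hvm, hvm]
    fin_cases a <;> simp
  have hvP : ∀ a b, v a b * f i0 i0 = v a b := by
    intro a b
    rw [← hv1, mul_add, hvm, hvm]
    fin_cases b <;> simp
  set w : Fin 2 → Fin 2 → Matrix m m ℂ := fun a b => ∑ i, f i i0 * v a b * f i0 i with hw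
  have hfw : ∀ k l a b, f k l * w a b = f k i0 * v a b * f i0 l := by
    intro k l a b
    rw [hw]
    simp only [Finset.mul_sum, ← mul_assoc, hfm, ite_mul, zero_mul]
    simp
  have hwf : ∀ k l a b, w a b * f k l = f k i0 * v a b * f i0 l := by
    intro k l a b
    rw [hw]
    simp only [Finset.sum_mul, mul_assoc, hfm, mul_ite, mul_zero]
    simp
  refine ⟨w, ?_, ?_, ?_, ?_, ?_⟩
  · intro a b
    simp only [hw, star_sum, star_mul, hfs, hvs, mul_assoc]
  · intro a b c d
    have h0 : w a b * w c d = ∑ i, f i i0 * (v a b * (f i0 i * w c d)) := by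
      conv_lhs => rw [show w a b = ∑ i, f i i0 * v a b * f i0 i from rfl]
      simp only [Finset.sum_mul, mul_assoc]
    rw [h0]
    simp only [hfw, mul_assoc]
    have h3 : ∀ i, f i i0 * (v a b * (f i0 i0 * (v c d * f i0 i))) =
        f i i0 * (v a b * v c d) * f i0 i := by
      intro i
      rw [← mul_assoc (f i0 i0), hPv]; simp only [mul_assoc]
    simp only [h3, hvm]
    split_ifs with h
    · rfl
    · simp
  · simp only [hw, ← Finset.sum_add_distrib, ← add_mul, ← mul_add, hv1, hmm, hf1]
  · intro a b i j
    rw [hfw, hwf]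
  · intro y
    choose c hc using fun i j => hvy (f i0 i * y * f j i0)
    refine ⟨fun a b i j => c i j a b, ?_⟩
    have h1 : y = ∑ i, ∑ j, f i i0 * (f i0 i0 * (f i0 i * y * f j i0) * f i0 i0) * f i0 j := by
      have : ∀ i j, f i i0 * (f i0 i0 * (f i0 i * y * f j i0) * f i0 i0) * f i0 j =
          f i i * y * f j j := by
        intro i j
        simp only [← mul_assoc, hmm]
        simp only [mul_assoc, hmm]
      simp only [this]
      simp only [← Finset.mul_sum, hf1, mul_one]
      rw [← Finset.sum_mul, hf1, one_mul]
    conv_lhs => rw [h1]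
    simp only [hc, Finset.mul_sum, Finset.sum_mul, mul_smul_comm, smul_mul_assoc, hfw]
    calc _ = ∑ i, ∑ a, ∑ j, ∑ b, c i j a b • (f i i0 * v a b * f i0 j) :=
          Finset.sum_congr rfl fun i _ => Finset.sum_comm
      _ = ∑ a, ∑ i, ∑ j, ∑ b, c i j a b • (f i i0 * v a b * f i0 j) := Finset.sum_comm
      _ = ∑ a, ∑ i, ∑ b, ∑ j, c i j a b • (f i i0 * v a b * f i0 j) :=
          Finset.sum_congr rfl fun i _ => Finset.sum_congr rfl fun i _ => Finset.sum_comm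
      _ = _ := Finset.sum_congr rfl fun i _ => Finset.sum_comm

structure RelUnits {F : Type*} [CStarAlgebra F] (S T : StarSubalgebra ℂ F)
    (w : Fin 2 → Fin 2 → F) : Prop where
  mem : ∀ a b, w a b ∈ T
  star : ∀ a b, star (w a b) = w b a
  mul : ∀ a b c d, w a b * w c d = if b = c then w a d else 0
  one : w 0 0 + w 1 1 = 1
  comm : ∀ a b, ∀ x ∈ S, w a b * x = x * w a b
  span : ∀ y ∈ T, ∃ c : Fin 2 → Fin 2 → F, (∀ a b, c a b ∈ S) ∧ y = ∑ a, ∑ b, c a b * w a b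

lemma exists_relUnits {F : Type*} [CStarAlgebra F] (S T : StarSubalgebra ℂ F) (hST : S ≤ T)
    {n : ℕ} (i0 : Fin n) {m : Type*} [Fintype m] [DecidableEq m] (hcard : Fintype.card m = 2 * n)
    (e : S ≃⋆ₐ[ℂ] Matrix (Fin n) (Fin n) ℂ) (g : T ≃⋆ₐ[ℂ] Matrix m m ℂ) :
    ∃ w, RelUnits S T w := by
  let ι : S →⋆ₐ[ℂ] T := StarSubalgebra.inclusion hST
  let h : Matrix (Fin n) (Fin n) ℂ → Matrix m m ℂ := fun x => g (ι (e.symm x))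
  have hmul : ∀ x y, h (x * y) = h x * h y := fun x y => by simp [h]
  have hstar : ∀ x, h (star x) = star (h x) := fun x => by simp [h, map_star]
  have hone : h 1 = 1 := by simp [h]
  have hsum : ∀ x : Fin n → Matrix (Fin n) (Fin n) ℂ, h (∑ i, x i) = ∑ i, h (x i) := 
    fun x => by simp [h]
  have hsmul : ∀ (c : ℂ) x, h (c • x) = c • h x := fun c x => by simp [h]
  have hz : h 0 = 0 := by simp [h]
  obtain ⟨w, hws, hwm, hw1, hwf, hwy⟩ := matrix_rel_units i0 hcard (fun i j => h (single i j 1))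
    (fun i j => by rw [← hstar]; simp [star_eq_conjTranspose])
    (fun i j k l => by
      rw [← hmul]
      split_ifs with hh
      · subst hh; simp
      · rw [single_mul_single_of_ne (h := hh), hz])
    (by
      rw [← hsum, ← hone]; congr 1
      exact Matrix.sum_single_one)
  have hdec : ∀ x, h x = ∑ i, ∑ j, x i j • h (single i j 1) := by
    intro x
    conv_lhs => rw [matrix_eq_sum_single x]
    simp only [hsum, ← hsmul, smul_single, smul_eq_mul, mul_one]
  have hwx : ∀ a b x, w a b * h x = h x * w a b := by
    intro a b x
    rw [hdec]
    simp only [Finset.mul_sum, Finset.sum_mul, mul_smul_comm, smul_mul_assoc, hwf]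
  refine ⟨fun a b => (g.symm (w a b) : F), ?_, ?_, ?_, ?_, ?_, ?_⟩
  · intro a b; exact (g.symm (w a b)).2
  · intro a b; rw [← hws a b, map_star]; rfl
  · intro a b c d
    rw [← MulMemClass.coe_mul, ← map_mul, hwm]
    split_ifs
    · rfl
    · simp
  · rw [← AddMemClass.coe_add, ← map_add, hw1]; simp
  · intro a b x hx
    have h1 := congrArg g.symm (hwx a b (e ⟨x, hx⟩))
    simp only [h, map_mul, StarAlgEquiv.symm_apply_apply] at h1
    exact congrArg Subtype.val h1
  · intro y hy
    obtain ⟨c, hc⟩ := hwy (g ⟨y, hy⟩)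
    refine ⟨fun a b => (e.symm (fun i j => c a b i j) : F), fun a b => (e.symm _).2, ?_⟩
    have hc' : g ⟨y, hy⟩ = ∑ a, ∑ b, h (fun i j => c a b i j) * w a b := by
      rw [hc]
      simp only [hdec (fun i j => _)]
    have h1 := congrArg Subtype.val (congrArg g.symm hc')
    simp only [h, map_sum, map_mul, StarAlgEquiv.symm_apply_apply] at h1
    rw [h1]
    simp only [AddSubmonoidClass.coe_finsetSum, MulMemClass.coe_mul]
    rfl

open Filter Topology

section cstar
variable {F : Type*} [CStarAlgebra F]

lemma norm_block (g1 g2 d1 d2 : F) (h : star g1 * g2 = 0) (M : ℝ) (h1 : ‖g1‖ ≤ M) (h2 : ‖g2‖ ≤ M)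
    (hd : star d1 * d1 + star d2 * d2 = 1) : ‖g1 * d1 + g2 * d2‖ ≤ M := by
  let _ := CStarAlgebra.spectralOrder F
  have := CStarAlgebra.spectralOrderedRing F
  have hM : 0 ≤ M := (norm_nonneg _).trans h1
  have h' : star g2 * g1 = 0 := by
    have := congrArg star h
    simpa using this
  have key : ∀ g d : F, ‖g‖ ≤ M → star d * (star g * g) * d ≤ (M ^ 2) • (star d * d) := by
    intro g d hg
    have hs : IsSelfAdjoint (star g * g) := IsSelfAdjoint.star_mul_self g
    refine (CStarAlgebra.star_left_conjugate_le_norm_smul hs).trans ?_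
    refine smul_le_smul_of_nonneg_right ?_ (star_mul_self_nonneg d)
    rw [CStarRing.norm_star_mul_self, ← sq]
    gcongr
  have hz : star (g1 * d1 + g2 * d2) * (g1 * d1 + g2 * d2) =
      star d1 * (star g1 * g1) * d1 + star d2 * (star g2 * g2) * d2 := by
    have e1 : star d1 * (star g1 * g2) * d2 = 0 := by rw [h]; simp
    have e2 : star d2 * (star g2 * g1) * d1 = 0 := by rw [h']; simp
    calc _ = star d1 * (star g1 * g1) * d1 + star d1 * (star g1 * g2) * d2 +
          star d2 * (star g2 * g1) * d1 + star d2 * (star g2 * g2) * d2 := by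
          simp only [star_add, star_mul]; noncomm_ring
      _ = _ := by rw [e1, e2]; simp
  have hle : star (g1 * d1 + g2 * d2) * (g1 * d1 + g2 * d2) ≤ algebraMap ℝ F (M ^ 2) := by
    rw [hz]
    refine (add_le_add (key g1 d1 h1) (key g2 d2 h2)).trans_eq ?_
    rw [← smul_add, hd, Algebra.algebraMap_eq_smul_one]
  have hn := (CStarAlgebra.norm_le_iff_le_algebraMap _ (sq_nonneg M) (star_mul_self_nonneg _)).2 hle
  rw [CStarRing.norm_star_mul_self, ← sq] at hn
  exact le_of_sq_le_sq hn hM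

lemma swap_units (w w' : Fin 2 → Fin 2 → F)
    (hs : ∀ a b, star (w a b) = w b a) (hs' : ∀ a b, star (w' a b) = w' b a)
    (hm : ∀ a b c d, w a b * w c d = if b = c then w a d else 0)
    (hm' : ∀ a b c d, w' a b * w' c d = if b = c then w' a d else 0)
    (h1 : w 0 0 + w 1 1 = 1) (h1' : w' 0 0 + w' 1 1 = 1)
    (hc : ∀ a b c d, w' a b * w c d = w c d * w' a b) (s : F)
    (hsdef : s = ∑ a, ∑ b, w a b * w' b a) :
    star s = s ∧ s * s = 1 ∧ ∀ a b, s * w a b = w' a b * s := by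
  have hsw : ∀ c d, s * w c d = ∑ a, w a d * w' c a := by
    intro c d
    simp only [hsdef, Finset.sum_mul, mul_assoc, hc]
    simp only [← mul_assoc, hm, ite_mul, zero_mul]
    simp
  have hws : ∀ c d, w' c d * s = ∑ a, w a d * w' c a := by
    intro c d
    simp only [hsdef, Finset.mul_sum, ← mul_assoc, hc]
    simp only [mul_assoc, hm', mul_ite, mul_zero]
    simp
  refine ⟨?_, ?_, ?_⟩
  · simp only [hsdef, star_sum, star_mul, hs, hs', hc]
    exact Finset.sum_comm
  · conv_lhs => rw [show s * s = s * ∑ a, ∑ b, w a b * w' b a by rw [← hsdef]]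
    simp only [Finset.mul_sum, ← mul_assoc, hsw, Finset.sum_mul]
    simp only [mul_assoc, hm', mul_ite, mul_zero]
    simp only [Fin.sum_univ_two]
    simp
    have : w 0 0 * w' 0 0 + w 0 0 * w' 1 1 + (w 1 1 * w' 0 0 + w 1 1 * w' 1 1) = 1 := by
      rw [← mul_add, ← mul_add, h1', mul_one, mul_one, h1]
    rw [← this]; abel
  · intro a b; rw [hsw, hws]

lemma lim_conj (u : ℕ → F) (hu : ∀ k, star (u k) * u k = 1) (hu' : ∀ k, u k * star (u k) = 1)
    (D : Set F) (hD : Dense D)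
    (h : ∀ x ∈ D, ∃ k, ∀ m, k ≤ m → u m * x * star (u m) = u k * x * star (u k)) :
    ∃ φ : F →ₗᵢ[ℂ] F, (∀ x y, φ (x * y) = φ x * φ y) ∧ φ 1 = 1 ∧
      ∀ x, Tendsto (fun m => u m * x * star (u m)) atTop (𝓝 (φ x)) := by
  have hun : ∀ k, u k ∈ unitary F := fun k => ⟨hu k, hu' k⟩
  have hnorm : ∀ k x, ‖u k * x * star (u k)‖ = ‖x‖ := by
    intro k x
    rw [CStarRing.norm_mul_mem_unitary _ (Unitary.star_mem (hun k)),
      CStarRing.norm_mem_unitary_mul _ (hun k)]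
  have hex : ∀ x, ∃ y, Tendsto (fun m => u m * x * star (u m)) atTop (𝓝 y) := by
    intro x
    apply cauchySeq_tendsto_of_complete
    rw [Metric.cauchySeq_iff']
    intro ε hε
    obtain ⟨z, hz, hxz⟩ := hD.exists_dist_lt x (half_pos hε)
    obtain ⟨k, hk⟩ := h z hz
    refine ⟨k, fun m hm => ?_⟩
    have e : u m * x * star (u m) - u k * x * star (u k) =
        u m * (x - z) * star (u m) - u k * (x - z) * star (u k) := by
      have := hk m hm
      simp only [mul_sub, sub_mul, this]; abel
    rw [dist_eq_norm, e]
    refine (norm_sub_le _ _).trans_lt ?_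
    rw [hnorm, hnorm, ← dist_eq_norm]; linarith
  choose φ hφ using hex
  refine ⟨{ toFun := φ, map_add' := ?_, map_smul' := ?_, norm_map' := ?_ }, ?_, ?_, hφ⟩
  · intro x y
    refine tendsto_nhds_unique (hφ _) (((hφ x).add (hφ y)).congr fun m => ?_)
    simp only [mul_add, add_mul]
  · intro c x
    refine tendsto_nhds_unique (hφ _) (((hφ x).const_smul c).congr fun m => ?_)
    simp only [mul_smul_comm, smul_mul_assoc]
  · intro x
    refine tendsto_nhds_unique (hφ x).norm ?_
    simp only [hnorm]
    exact tendsto_const_nhds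
  · intro x y
    refine tendsto_nhds_unique (hφ _) (((hφ x).mul (hφ y)).congr fun m => ?_)
    calc _ = u m * x * (star (u m) * u m) * y * star (u m) := by simp only [mul_assoc]
      _ = _ := by rw [hu]; simp only [mul_assoc, one_mul]
  · refine tendsto_nhds_unique (hφ _) ?_
    simp only [mul_one, hu']
    exact tendsto_const_nhds
end cstar

section main
variable {F : Type*} [CStarAlgebra F]

lemma main_aux (S : ℕ → StarSubalgebra ℂ F) (hmono : Monotone S)
    (hdense : Dense (⋃ k, (S k : Set F))) (w : ℕ → Fin 2 → Fin 2 → F)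
    (hw : ∀ k, RelUnits (S k) (S (k + 1)) (w k))
    (hS0 : ∀ x ∈ S 0, ∃ c : ℂ, x = c • 1) :
    Nonempty (F ≃L[ℂ] ZeroAtInftyContinuousMap ℕ F) := by
  -- the flips
  obtain ⟨s, hs⟩ : ∃ s : ℕ → F, ∀ k, s k = ∑ a, ∑ b, w k a b * w (k + 1) b a := ⟨_, fun _ => rfl⟩
  have hflip := fun k => swap_units (w k) (w (k + 1)) (hw k).star (hw (k + 1)).star (hw k).mul
    (hw (k + 1)).mul (hw k).one (hw (k + 1)).one
    (fun a b c d => (hw (k + 1)).comm a b _ ((hw k).mem c d)) (s k) (hs k)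
  have hsmem : ∀ k, s k ∈ S (k + 2) := by
    intro k
    rw [hs]
    exact sum_mem fun a _ => sum_mem fun b _ =>
      mul_mem (hmono (by omega) ((hw k).mem a b)) ((hw (k + 1)).mem b a)
  have hscomm : ∀ k, ∀ x ∈ S k, s k * x = x * s k := by
    intro k x hx
    rw [hs]
    simp only [Finset.sum_mul, Finset.mul_sum]
    refine Finset.sum_congr rfl fun a _ => Finset.sum_congr rfl fun b _ => ?_
    rw [mul_assoc, (hw (k + 1)).comm b a x (hmono (Nat.le_succ k) hx), ← mul_assoc,
      (hw k).comm a b x hx, mul_assoc]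
  let u : ℕ → F := fun k => Nat.rec 1 (fun k y => y * s k) k
  have hu0 : u 0 = 1 := rfl
  have husucc : ∀ k, u (k + 1) = u k * s k := fun k => rfl
  have humem : ∀ k, u k ∈ S (k + 1) := by
    intro k
    induction k with
    | zero => rw [hu0]; exact one_mem _
    | succ k ih => rw [husucc]; exact mul_mem (hmono (Nat.le_succ _) ih) (hsmem k)
  have hu : ∀ k, star (u k) * u k = 1 := by
    intro k
    induction k with
    | zero => simp [hu0]
    | succ k ih =>
      rw [husucc, star_mul, (hflip k).1]
      calc s k * star (u k) * (u k * s k) = s k * (star (u k) * u k) * s k := by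
            simp only [mul_assoc]
        _ = 1 := by rw [ih, mul_one, (hflip k).2.1]
  have hu' : ∀ k, u k * star (u k) = 1 := by
    intro k
    induction k with
    | zero => simp [hu0]
    | succ k ih =>
      rw [husucc, star_mul, (hflip k).1]
      calc u k * s k * (s k * star (u k)) = u k * (s k * s k) * star (u k) := by
            simp only [mul_assoc]
        _ = 1 := by rw [(hflip k).2.1, mul_one, ih]
  have hstab : ∀ k, ∀ x ∈ S k, ∀ m, k ≤ m → u m * x * star (u m) = u k * x * star (u k) := by
    intro k x hx m hm
    induction m, hm using Nat.le_induction with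
    | base => rfl
    | succ m hm ih =>
      rw [← ih, husucc, star_mul, (hflip m).1]
      calc u m * s m * x * (s m * star (u m)) = u m * (s m * x) * s m * star (u m) := by
            simp only [mul_assoc]
        _ = u m * x * (s m * s m) * star (u m) := by
            rw [hscomm m x (hmono hm hx)]; simp only [mul_assoc]
        _ = _ := by rw [(hflip m).2.1, mul_one]
  obtain ⟨φ, hφm, hφ1, hφt⟩ := lim_conj u hu hu' _ hdense (by
    intro x hx
    obtain ⟨k, hk⟩ := Set.mem_iUnion.1 hx
    exact ⟨k, hstab k x hk⟩)
  have hφS : ∀ k, ∀ x ∈ S k, φ x = u k * x * star (u k) := by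
    intro k x hx
    refine tendsto_nhds_unique (hφt x) (tendsto_const_nhds.congr' ?_)
    filter_upwards [eventually_ge_atTop k] with m hm
    exact (hstab k x hx m hm).symm
  have hφw : ∀ k a b, φ (w k a b) = w (k + 1) a b := by
    intro k a b
    rw [hφS (k + 1) _ ((hw k).mem a b), husucc, star_mul, (hflip k).1]
    calc u k * s k * w k a b * (s k * star (u k)) = u k * (s k * w k a b) * s k * star (u k) := by
          simp only [mul_assoc]
      _ = u k * w (k + 1) a b * (s k * s k) * star (u k) := by
          rw [(hflip k).2.2]; simp only [mul_assoc]
      _ = w (k + 1) a b * (u k * star (u k)) := by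
          rw [(hflip k).2.1, mul_one, ← (hw (k + 1)).comm a b _ (humem k), mul_assoc]
      _ = _ := by rw [hu', mul_one]
  have hw0mem : ∀ k a b, w 0 a b ∈ S (k + 1) := fun k a b => hmono (by omega) ((hw 0).mem a b)
  -- the range of φ commutes with `w 0`
  have hcommS : ∀ k, ∀ x ∈ S k, ∀ a b, φ x * w 0 a b = w 0 a b * φ x := by
    intro k
    induction k with
    | zero =>
      intro x hx a b
      obtain ⟨c, rfl⟩ := hS0 x hx
      simp [hφ1]
    | succ k ih =>
      intro x hx a b
      obtain ⟨c, hc, rfl⟩ := (hw k).span x hx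
      simp only [map_sum, hφm, hφw, Finset.sum_mul, Finset.mul_sum]
      refine Finset.sum_congr rfl fun a' _ => Finset.sum_congr rfl fun b' _ => ?_
      rw [mul_assoc, (hw (k + 1)).comm a' b' _ (hw0mem k a b), ← mul_assoc, ih _ (hc _ _), mul_assoc]
  have hcomm : ∀ x a b, φ x * w 0 a b = w 0 a b * φ x := by
    intro x a b
    refine hdense.induction (P := fun x => φ x * w 0 a b = w 0 a b * φ x) ?_ ?_ x
    · intro x hx
      obtain ⟨k, hk⟩ := Set.mem_iUnion.1 hx
      exact hcommS k x hk a b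
    · exact isClosed_eq (φ.continuous.mul continuous_const) (continuous_const.mul φ.continuous)
  -- decomposition
  have hdecomp : ∀ j, ∀ y ∈ S (j + 1), ∃ x : Fin 2 → Fin 2 → F, (∀ a b, x a b ∈ S j) ∧
      y = ∑ a, ∑ b, w 0 a b * φ (x a b) := by
    intro j
    induction j with
    | zero =>
      intro y hy
      obtain ⟨c, hc, rfl⟩ := (hw 0).span y hy
      refine ⟨c, hc, Finset.sum_congr rfl fun a _ => Finset.sum_congr rfl fun b _ => ?_⟩
      obtain ⟨t, ht⟩ := hS0 _ (hc a b)
      simp [ht, hφ1]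
    | succ j ih =>
      intro y hy
      obtain ⟨c, hc, rfl⟩ := (hw (j + 1)).span y hy
      choose x hx hcx using fun a b => ih (c a b) (hc a b)
      refine ⟨fun a' b' => ∑ a, ∑ b, x a b a' b' * w j a b, fun a' b' => ?_, ?_⟩
      · exact sum_mem fun a _ => sum_mem fun b _ =>
          mul_mem (hmono (Nat.le_succ j) (hx a b a' b')) ((hw j).mem a b)
      · simp only [map_sum, hφm, hφw, Finset.mul_sum]
        simp only [hcx, Finset.sum_mul, mul_assoc]
        simp only [Fin.sum_univ_two]
        abel
  obtain ⟨Dm, hDm⟩ : ∃ Dm : Fin 2 → Fin 2 → F → F, ∀ a b y,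
      Dm a b y = w 0 0 a * y * w 0 b 0 + w 0 1 a * y * w 0 b 1 := ⟨_, fun _ _ _ => rfl⟩
  have hDw : ∀ a b c d x, Dm a b (w 0 c d * φ x) = if a = c ∧ d = b then φ x else 0 := by
    intro a b c d x
    have h1 : ∀ i, w 0 i a * (w 0 c d * φ x) * w 0 b i =
        if a = c ∧ d = b then w 0 i i * φ x else 0 := by
      intro i
      rw [mul_assoc, mul_assoc, hcomm, ← mul_assoc (w 0 c d), (hw 0).mul]
      by_cases hd : d = b
      · rw [if_pos hd, ← mul_assoc, (hw 0).mul]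
        by_cases ha : a = c
        · rw [if_pos ha, if_pos ⟨ha, hd⟩]
        · rw [if_neg ha, if_neg (fun h => ha h.1), zero_mul]
      · rw [if_neg hd, if_neg (fun h => hd h.2), zero_mul, mul_zero]
    rw [hDm, h1, h1]
    split_ifs
    · rw [← add_mul, (hw 0).one, one_mul]
    · simp
  have hDadd : ∀ a b x y, Dm a b (x + y) = Dm a b x + Dm a b y := by
    intro a b x y; simp only [hDm, mul_add, add_mul]; abel
  have hDsmul : ∀ a b (c : ℂ) x, Dm a b (c • x) = c • Dm a b x := by
    intro a b c x; simp only [hDm, mul_smul_comm, smul_mul_assoc, smul_add]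
  have hwnorm : ∀ a b (x : F), ‖w 0 a b * x‖ ≤ ‖x‖ := by
    intro a b x
    have h1 : ‖w 0 a b‖ ≤ 1 := by
      have h2 : ∀ a b, ‖w 0 a b‖ * ‖w 0 a b‖ = ‖w 0 b b‖ := by
        intro a b
        rw [← CStarRing.norm_star_mul_self, (hw 0).star, (hw 0).mul, if_pos rfl]
      have h3 := h2 a b
      have h4 := h2 b b
      have h5 : ‖w 0 b b‖ ≤ 1 := by
        by_contra hcon
        push Not at hcon
        nlinarith
      nlinarith [norm_nonneg (w 0 a b)]
    calc _ ≤ ‖w 0 a b‖ * ‖x‖ := norm_mul_le _ _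
      _ ≤ 1 * ‖x‖ := by gcongr
      _ = _ := one_mul _
  have hDnorm : ∀ a b y, ‖Dm a b y‖ ≤ ‖y‖ := by
    intro a b y
    rw [hDm]
    refine norm_block _ _ _ _ ?_ _ (hwnorm _ _ _) (hwnorm _ _ _) ?_
    · rw [star_mul, (hw 0).star, mul_assoc, ← mul_assoc (w 0 a 0), (hw 0).mul]
      simp
    · simp only [(hw 0).star, (hw 0).mul, if_true, (hw 0).one]
  have hDcont : ∀ a b, Continuous (Dm a b) := by
    intro a b
    have : Dm a b = fun y => w 0 0 a * y * w 0 b 0 + w 0 1 a * y * w 0 b 1 := funext (hDm a b)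
    rw [this]; fun_prop
  have hDsumw : ∀ a b (x : Fin 2 → Fin 2 → F), Dm a b (∑ c, ∑ d, w 0 c d * φ (x c d)) = φ (x a b) := by
    intro a b x
    simp only [Fin.sum_univ_two, hDadd, hDw]
    fin_cases a <;> fin_cases b <;> simp
  have hDS : ∀ j, ∀ y ∈ S (j + 1), ∀ a b, ∃ x ∈ S j, φ x = Dm a b y := by
    intro j y hy a b
    obtain ⟨x, hx, rfl⟩ := hdecomp j y hy
    exact ⟨x a b, hx a b, (hDsumw a b x).symm⟩
  have hrange : ∀ a b y, ∃ x, φ x = Dm a b y := by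
    intro a b y
    refine hdense.induction (P := fun y => Dm a b y ∈ Set.range φ) ?_ ?_ y
    · intro y hy
      obtain ⟨k, hk⟩ := Set.mem_iUnion.1 hy
      obtain ⟨x, -, hx⟩ := hDS k y (hmono (Nat.le_succ k) hk) a b
      exact ⟨x, hx⟩
    · exact (φ.isometry.isClosedEmbedding.isClosed_range).preimage (hDcont a b)
  choose E0 hE0 using hrange
  let E : Fin 2 → Fin 2 → F →L[ℂ] F := fun a b =>
    LinearMap.mkContinuous
      { toFun := E0 a b
        map_add' := fun x y => φ.injective (by rw [map_add, hE0, hE0, hE0, hDadd])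
        map_smul' := fun c x => φ.injective (by
          rw [RingHom.id_apply, map_smul, hE0, hE0, hDsmul]) } 1 (fun y => by
        rw [one_mul, ← φ.norm_map]
        change ‖φ (E0 a b y)‖ ≤ _
        rw [hE0]; exact hDnorm a b y)
  have hE : ∀ a b y, φ (E a b y) = Dm a b y := fun a b y => hE0 a b y
  have hEnorm : ∀ a b y, ‖E a b y‖ ≤ ‖y‖ := by
    intro a b y; rw [← φ.norm_map, hE]; exact hDnorm a b y
  let A : Fin 2 → Fin 2 → F →L[ℂ] F := fun a b =>
    (ContinuousLinearMap.mul ℂ F (w 0 a b)).comp φ.toContinuousLinearMap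
  have hA : ∀ a b x, A a b x = w 0 a b * φ x := fun a b x => rfl
  have hEA : ∀ a b c d x, E a b (A c d x) = if a = c ∧ d = b then x else 0 := by
    intro a b c d x
    apply φ.injective
    rw [hE, hA, hDw]
    split_ifs <;> simp
  have hES : ∀ j, ∀ y ∈ S (j + 1), ∀ a b, E a b y ∈ S j := by
    intro j y hy a b
    obtain ⟨x, hx, hxy⟩ := hDS j y hy a b
    rw [← hE] at hxy
    rwa [← φ.injective hxy]
  have hE1 : ∀ a b, E a b 1 = if a = b then 1 else 0 := by
    intro a b
    have : (1 : F) = A 0 0 1 + A 1 1 1 := by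
      rw [hA, hA, hφ1, mul_one, mul_one, (hw 0).one]
    conv_lhs => rw [this]
    rw [map_add, hEA, hEA]
    fin_cases a <;> fin_cases b <;> simp
  have hES0 : ∀ y ∈ S 0, E 0 0 y = y := by
    intro y hy
    obtain ⟨c, rfl⟩ := hS0 y hy
    rw [map_smul, hE1, if_pos rfl]
  refine stage_two (A 0 0) ((A 1 1).comp (A 0 1)) (E 0 0) ((E 0 1).comp (E 1 1))
    ?_ ?_ ?_ ?_ ?_ ?_ ?_ _ hdense ?_
  · intro x; rw [hEA]; simp
  · intro x; rw [ContinuousLinearMap.comp_apply, hEA]; simp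
  · intro x; rw [ContinuousLinearMap.comp_apply, hEA]; simp
  · intro x
    rw [ContinuousLinearMap.comp_apply, ContinuousLinearMap.comp_apply, hEA, if_pos ⟨rfl, rfl⟩, hEA,
      if_pos ⟨rfl, rfl⟩]
  · exact hEnorm 0 0
  · intro x; exact (hEnorm _ _ _).trans (hEnorm _ _ _)
  · intro M a b ha hb
    have hb' : ‖A 0 1 b‖ ≤ M := by
      rw [hA]; refine (hwnorm _ _ _).trans ?_; rwa [φ.norm_map]
    change ‖w 0 0 0 * φ a + w 0 1 1 * φ (A 0 1 b)‖ ≤ M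
    have h1 : ∀ i x, w 0 i i * φ x = w 0 i i * φ x * w 0 i i := by
      intro i x
      rw [mul_assoc, hcomm, ← mul_assoc, (hw 0).mul, if_pos rfl]
    rw [h1 0, h1 1]
    refine norm_block _ _ _ _ ?_ _ ((hwnorm _ _ _).trans ?_) ((hwnorm _ _ _).trans ?_) ?_
    · rw [star_mul, (hw 0).star, mul_assoc, ← mul_assoc (w 0 0 0), (hw 0).mul]
      simp
    · rwa [φ.norm_map]
    · rwa [φ.norm_map]
    · simp only [(hw 0).star, (hw 0).mul, if_true, (hw 0).one]
  · intro y hy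
    obtain ⟨k, hk⟩ := Set.mem_iUnion.1 hy
    have hit : ∀ k, ∀ y ∈ S k, ∀ n, k ≤ n → (E 0 0)^[n] y ∈ S 0 := by
      intro k
      induction k with
      | zero =>
        intro y hy n _
        rw [Function.iterate_fixed (hES0 y hy)]
        exact hy
      | succ k ih =>
        intro y hy n hn
        obtain ⟨n, rfl⟩ : ∃ n', n = n' + 1 := ⟨n - 1, by omega⟩
        rw [Function.iterate_succ_apply]
        exact ih _ (hES k y hy 0 0) n (by omega)
    filter_upwards [eventually_ge_atTop k] with n hn
    obtain ⟨c, hc⟩ := hS0 _ (hit k y hk n hn)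
    rw [hc, ContinuousLinearMap.comp_apply, map_smul, map_smul, hE1, if_pos rfl, hE1]
    simp

end main

theorem fermion_algebra_linearly_homeomorphic_c0
    (F : Type*) [CStarAlgebra F]
    (S : ℕ → StarSubalgebra ℂ F)
    (hmono : Monotone S)
    (hiso : ∀ k, Nonempty ((S k) ≃⋆ₐ[ℂ] Matrix (Fin (2 ^ k)) (Fin (2 ^ k)) ℂ))
    (hdense : Dense (⋃ k, (S k : Set F))) :
    Nonempty (F ≃L[ℂ] ZeroAtInftyContinuousMap ℕ F) := by
  have hex : ∀ k, ∃ w, RelUnits (S k) (S (k + 1)) w := by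
    intro k
    obtain ⟨e⟩ := hiso k
    obtain ⟨g⟩ := hiso (k + 1)
    exact exists_relUnits (S k) (S (k + 1)) (hmono (Nat.le_succ k)) ⟨0, by positivity⟩
      (by rw [Fintype.card_fin, pow_succ, mul_comm]) e g
  choose w hw using hex
  refine main_aux S hmono hdense w hw ?_
  intro x hx
  obtain ⟨e⟩ := hiso 0
  refine ⟨e ⟨x, hx⟩ 0 0, ?_⟩
  have h1 : e ⟨x, hx⟩ = (e ⟨x, hx⟩ 0 0) • 1 := by
    ext i j
    have hi : i = 0 := Subsingleton.elim (α := Fin 1) i 0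
    have hj : j = 0 := Subsingleton.elim (α := Fin 1) j 0
    subst hi; subst hj
    simp
  have h2 := congrArg e.symm h1
  rw [map_smul, map_one, StarAlgEquiv.symm_apply_apply] at h2
  exact congrArg Subtype.val h2
end
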